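/- Let n ≥ 2, let 𝒪 ⊂ ℝⁿ be a nonempty open set, let N ≥ 1, T > 0, and let 0 < α_1 < α_2 < … < α_N be real numbers, none of which is a positive integer, such that α_k − α_j is not an integer whenever j ≠ k. Write α_k = m_k + s_k with m_k ∈ ℕ∪{0} the integer part and s_k ∈ (0,1), and define 𝓗^{α_k} u := 𝓗^{s_k}((∂_t − Δ)^{m_k} u). Suppose u_1, …, u_N ∈ C^∞((−∞,T); 𝒮(ℝⁿ)) satisfy: there exist δ > 0 and, for each multi-index β ∈ (ℕ∪{0})^{n+1}, a constant C_β > 0 and a Schwartz function φ_β ∈ 𝒮(ℝⁿ) such that |D^β_{x,t} u_k(x,t)| ≤ C_β |φ_β(x)| e^{δt} for all (x,t) ∈ ℝⁿ × (−∞,−T], all β, and all k. If u_1 = … = u_N = 0 on 𝒪 × (−T,T) and Σ_{k=1}^N b_k 𝓗^{α_k} u_k = 0 on 𝒪 × (−T,T) for some nonzero complex constants b_1,…,b_N, then u_k = 0 on ℝⁿ × (−T,T) for all k = 1,…,N. -/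

import Mathlib

open MeasureTheory Real Set Complex

noncomputable section

/-- A space-time point `(x, t)` with `x : Fin n → ℝ` and `t : ℝ`. -/
abbrev SpaceTime (n : ℕ) := (Fin n → ℝ) × ℝ

/-- Squared Euclidean norm `|x|² = ∑ xᵢ²`. -/
def sqNorm {n : ℕ} (x : Fin n → ℝ) : ℝ := ∑ i, x i ^ 2

/-- The Euclidean heat kernel `G_τ(x) = (4πτ)^{-n/2} exp(-|x|²/(4τ))`. -/
def heatKernel (n : ℕ) (τ : ℝ) (x : Fin n → ℝ) : ℝ :=
  (4 * π * τ) ^ (-(n : ℝ) / 2) * Real.exp (-(sqNorm x) / (4 * τ))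

/-- The parabolic evolution semigroup `(e^{-τ𝓗} u)(x,t) = ∫ G_τ(x-y) u(y, t-τ) dy`. -/
def heatSemigroup (n : ℕ) (τ : ℝ) (u : SpaceTime n → ℂ) (p : SpaceTime n) : ℂ :=
  ∫ y : Fin n → ℝ, (heatKernel n τ (p.1 - y) : ℂ) * u (y, p.2 - τ)

/-- The fractional heat operator
`𝓗^s u(x,t) = (1/Γ(-s)) ∫_0^∞ ((e^{-τ𝓗}u)(x,t) - u(x,t)) τ^{-1-s} dτ`. -/
def fracHeat (n : ℕ) (s : ℝ) (u : SpaceTime n → ℂ) (p : SpaceTime n) : ℂ :=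
  (1 / (Real.Gamma (-s) : ℂ)) *
    ∫ τ in Ioi (0 : ℝ), (heatSemigroup n τ u p - u p) * ((τ ^ (-1 - s) : ℝ) : ℂ)

/-- Partial derivative in the direction `v`. -/
def pderivDir (n : ℕ) (v : SpaceTime n) (u : SpaceTime n → ℂ) : SpaceTime n → ℂ :=
  fun p => fderiv ℝ u p v

/-- The `i`-th spatial coordinate direction. -/
def eSpace (n : ℕ) (i : Fin n) : SpaceTime n := (Pi.single i 1, 0)

/-- The time coordinate direction. -/
def eTime (n : ℕ) : SpaceTime n := (0, 1)

/-- The mixed partial derivative `D^β_{x,t} = ∂_t^{β₀} ∂_{x_1}^{β₁} ⋯ ∂_{x_n}^{β_n}`. -/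
def Dmixed (n : ℕ) (β0 : ℕ) (β : Fin n → ℕ) (u : SpaceTime n → ℂ) : SpaceTime n → ℂ :=
  (pderivDir n (eTime n))^[β0] <|
    (List.finRange n).foldr (fun i w => (pderivDir n (eSpace n i))^[β i] w) u

/-- The heat operator `∂_t - Δ_x`. -/
def heatOp (n : ℕ) (u : SpaceTime n → ℂ) : SpaceTime n → ℂ :=
  fun p => pderivDir n (eTime n) u p -
    ∑ i : Fin n, pderivDir n (eSpace n i) (pderivDir n (eSpace n i) u) p

/-- The space-time Fourier transform `û(ξ,ρ) = ∫ u(x,t) e^{-i(x·ξ + tρ)} dx dt`. -/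
def fourierST (n : ℕ) (u : SpaceTime n → ℂ) (q : SpaceTime n) : ℂ :=
  ∫ p : SpaceTime n, u p * Complex.exp (-Complex.I * (∑ i, p.1 i * q.1 i + p.2 * q.2))

/-- The parabolic symbol `iρ + |ξ|²`. -/
def parSymbol (n : ℕ) (q : SpaceTime n) : ℂ :=
  Complex.I * q.2 + (sqNorm q.1 : ℂ)

/-- `v ∈ C^∞((-∞,T); 𝒮(ℝⁿ))`: smooth on `ℝⁿ × (-∞,T)` and, together with all of its
mixed derivatives, decaying faster than any power of `x`, locally uniformly in `t < T`. -/
def SmoothSchwartzUpTo (n : ℕ) (T : ℝ) (v : SpaceTime n → ℂ) : Prop :=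
  ContDiffOn ℝ (⊤ : ℕ∞) v {p : SpaceTime n | p.2 < T} ∧
  ∀ (β0 : ℕ) (β : Fin n → ℕ) (k : ℕ) (a T' : ℝ), T' < T →
    ∃ C : ℝ, ∀ (x : Fin n → ℝ) (t : ℝ), a ≤ t → t ≤ T' →
      ‖x‖ ^ k * ‖Dmixed n β0 β v (x, t)‖ ≤ C

/-- The fractional poly-parabolic power `𝓗^α := 𝓗^{s}((∂_t - Δ)^{m} ·)`,
where `α = m + s` with `m = ⌊α⌋` the integer part and `s ∈ (0,1)` the fractional part. -/
def fracHeatPoly (n : ℕ) (α : ℝ) (u : SpaceTime n → ℂ) : SpaceTime n → ℂ :=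
  fracHeat n (α - ↑⌊α⌋) ((heatOp n)^[⌊α⌋.toNat] u)

section Part1

open scoped ContDiff

/-- Coordinate directions in space-time: `none` is time, `some i` is the `i`-th space direction. -/
def dirv (n : ℕ) : Option (Fin n) → SpaceTime n
  | none => eTime n
  | some i => eSpace n i

/-- Iterated partial derivatives along a list of coordinate directions. -/
def iterD (n : ℕ) (L : List (Option (Fin n))) (v : SpaceTime n → ℂ) : SpaceTime n → ℂ :=
  L.foldr (fun o w => pderivDir n (dirv n o) w) v

/-- The half space `t < T`. -/
def HSp (n : ℕ) (T : ℝ) : Set (SpaceTime n) := {p | p.2 < T}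

lemma HSp_open (n : ℕ) (T : ℝ) : IsOpen (HSp n T) :=
  isOpen_lt continuous_snd continuous_const

/-- Working class: smooth for `t < T` and all derivatives bounded by `C e^{δ t}` on every half space below `T`. -/
structure Good (n : ℕ) (T δ : ℝ) (v : SpaceTime n → ℂ) : Prop where
  smooth : ContDiffOn ℝ ∞ v (HSp n T)
  bd : ∀ L : List (Option (Fin n)), ∀ T' < T, ∃ C : ℝ, 0 ≤ C ∧ ∀ (x : Fin n → ℝ) (t : ℝ), t ≤ T' →
    ‖iterD n L v (x, t)‖ ≤ C * Real.exp (δ * t)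

lemma pderivDir_smooth {n : ℕ} {U : Set (SpaceTime n)} (hU : IsOpen U) {v : SpaceTime n → ℂ}
    (h : ContDiffOn ℝ ∞ v U) (e : SpaceTime n) : ContDiffOn ℝ ∞ (pderivDir n e v) U := by
  have := h.fderiv_of_isOpen hU (m := ∞) (by simp)
  exact this.clm_apply contDiffOn_const

lemma iterD_smooth {n : ℕ} {U : Set (SpaceTime n)} (hU : IsOpen U) {v : SpaceTime n → ℂ}
    (h : ContDiffOn ℝ ∞ v U) (L : List (Option (Fin n))) : ContDiffOn ℝ ∞ (iterD n L v) U := by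
  induction L with
  | nil => exact h
  | cons o L ih => exact pderivDir_smooth hU ih _

lemma pderivDir_congr {n : ℕ} {U : Set (SpaceTime n)} (hU : IsOpen U) {v w : SpaceTime n → ℂ}
    (h : EqOn v w U) (e : SpaceTime n) : EqOn (pderivDir n e v) (pderivDir n e w) U := by
  intro p hp
  have : v =ᶠ[nhds p] w := Filter.eventuallyEq_of_mem (hU.mem_nhds hp) h
  simp only [pderivDir, this.fderiv_eq]

lemma iterD_congr {n : ℕ} {U : Set (SpaceTime n)} (hU : IsOpen U) {v w : SpaceTime n → ℂ}
    (h : EqOn v w U) (L : List (Option (Fin n))) : EqOn (iterD n L v) (iterD n L w) U := by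
  induction L with
  | nil => exact h
  | cons o L ih => exact pderivDir_congr hU ih _

lemma smooth_diffAt {n : ℕ} {U : Set (SpaceTime n)} (hU : IsOpen U) {v : SpaceTime n → ℂ}
    (h : ContDiffOn ℝ ∞ v U) {p : SpaceTime n} (hp : p ∈ U) : DifferentiableAt ℝ v p :=
  ((h.contDiffAt (hU.mem_nhds hp)).differentiableAt (by simp))

lemma pderivDir_comm {n : ℕ} {U : Set (SpaceTime n)} (hU : IsOpen U) {v : SpaceTime n → ℂ}
    (h : ContDiffOn ℝ ∞ v U) (e f : SpaceTime n) :
    EqOn (pderivDir n e (pderivDir n f v)) (pderivDir n f (pderivDir n e v)) U := by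
  intro p hp
  have hc : ContDiffAt ℝ ∞ v p := h.contDiffAt (hU.mem_nhds hp)
  have hs : IsSymmSndFDerivAt ℝ v p := hc.isSymmSndFDerivAt (by simp; exact WithTop.coe_le_coe.mpr (le_top : (2 : ℕ∞) ≤ ⊤))
  have hd : DifferentiableAt ℝ (fderiv ℝ v) p :=
    ((h.fderiv_of_isOpen hU (m := ∞) (by simp)).contDiffAt (hU.mem_nhds hp)).differentiableAt
      (by simp)
  have key : ∀ a b : SpaceTime n, pderivDir n a (pderivDir n b v) p = fderiv ℝ (fderiv ℝ v) p a b := by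
    intro a b
    simp only [pderivDir]
    change fderiv ℝ (fun q => (fderiv ℝ v q) b) p a = _
    rw [fderiv_clm_apply hd (differentiableAt_const b)]
    simp
  rw [key, key]
  exact hs e f

lemma iterD_perm {n : ℕ} {U : Set (SpaceTime n)} (hU : IsOpen U) {v : SpaceTime n → ℂ}
    (h : ContDiffOn ℝ ∞ v U) {L M : List (Option (Fin n))} (hp : L.Perm M) :
    EqOn (iterD n L v) (iterD n M v) U := by
  induction hp with
  | nil => exact fun _ _ => rfl
  | cons o _ ih => exact pderivDir_congr hU ih _
  | swap a b l => exact pderivDir_comm hU (iterD_smooth hU h l) _ _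
  | trans _ _ ih1 ih2 => exact ih1.trans ih2

lemma iterD_append {n : ℕ} (L M : List (Option (Fin n))) (v : SpaceTime n → ℂ) :
    iterD n (L ++ M) v = iterD n L (iterD n M v) := by
  simp [iterD, List.foldr_append]

lemma iterD_replicate {n : ℕ} (k : ℕ) (o : Option (Fin n)) (v : SpaceTime n → ℂ) :
    iterD n (List.replicate k o) v = (pderivDir n (dirv n o))^[k] v := by
  induction k with
  | zero => rfl
  | succ k ih =>
    rw [Function.iterate_succ_apply', ← ih]; rfl

lemma Dmixed_eq {n : ℕ} (β0 : ℕ) (β : Fin n → ℕ) (v : SpaceTime n → ℂ) :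
    Dmixed n β0 β v = iterD n (List.replicate β0 none ++
      (List.finRange n).flatMap (fun i => List.replicate (β i) (some i))) v := by
  rw [iterD_append, iterD_replicate]
  unfold Dmixed
  congr 1
  induction (List.finRange n) with
  | nil => rfl
  | cons i l ih =>
    rw [List.flatMap_cons, iterD_append, iterD_replicate, List.foldr_cons, ih]
    rfl

lemma iterD_eq_Dmixed {n : ℕ} {U : Set (SpaceTime n)} (hU : IsOpen U) {v : SpaceTime n → ℂ}
    (h : ContDiffOn ℝ ∞ v U) (L : List (Option (Fin n))) :
    EqOn (iterD n L v) (Dmixed n (L.count none) (fun i => L.count (some i)) v) U := by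
  rw [Dmixed_eq]
  apply iterD_perm hU h
  rw [List.perm_iff_count]
  intro a
  rw [List.count_append, List.count_flatMap]
  cases a with
  | none =>
    simp [List.count_replicate, Function.comp_def]
  | some i =>
    simp only [List.count_replicate, Function.comp_def]
    have : ∀ j : Fin n, (if (some j == some i) = true then List.count (some j) L else 0) =
        if j = i then L.count (some i) else 0 := by
      intro j; by_cases hj : j = i <;> simp [hj]
    simp only [this]
    rw [← List.ofFn_eq_map, List.sum_ofFn]
    simp

lemma Good.of_hyp {n : ℕ} {T δ : ℝ} {v : SpaceTime n → ℂ} (hδ : 0 < δ)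
    (h1 : SmoothSchwartzUpTo n T v)
    (h2 : ∀ (β0 : ℕ) (β : Fin n → ℕ),
      ∃ C : ℝ, 0 < C ∧ ∃ φ : SchwartzMap (Fin n → ℝ) ℝ,
        ∀ (x : Fin n → ℝ) (t : ℝ), t ≤ -T →
          ‖Dmixed n β0 β v (x, t)‖ ≤ C * |φ x| * Real.exp (δ * t)) : Good n T δ v := by
  refine ⟨h1.1, fun L T' hT' => ?_⟩
  obtain ⟨C1, hC1, φ, hφ⟩ := h2 (L.count none) (fun i => L.count (some i))
  obtain ⟨C2, hC2⟩ := h1.2 (L.count none) (fun i => L.count (some i)) 0 (-T) T' hT'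
  obtain ⟨M, hM⟩ := φ.decay 0 0
  have hM' : ∀ x, |φ x| ≤ M := by
    intro x; have := hM.2 x; simpa using this
  have hM0 : 0 < M := hM.1
  refine ⟨C1 * M + |C2| * Real.exp (δ * T), by positivity, fun x t ht => ?_⟩
  have hin : ((x, t) : SpaceTime n) ∈ HSp n T := lt_of_le_of_lt ht hT'
  rw [iterD_eq_Dmixed (HSp_open n T) h1.1 L hin]
  rcases le_total t (-T) with h | h
  · calc _ ≤ C1 * |φ x| * Real.exp (δ * t) := hφ x t h
      _ ≤ C1 * M * Real.exp (δ * t) := by gcongr; exact hM' x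
      _ ≤ _ := by
        rw [add_mul]
        have : 0 ≤ |C2| * Real.exp (δ * T) * Real.exp (δ * t) := by positivity
        linarith
  · have h3 := hC2 x t h ht
    simp only [pow_zero, one_mul] at h3
    calc _ ≤ |C2| * 1 := by rw [mul_one]; exact h3.trans (le_abs_self _)
      _ ≤ |C2| * (Real.exp (δ * T) * Real.exp (δ * t)) := by
        gcongr
        rw [← Real.exp_add]
        apply Real.one_le_exp
        nlinarith
      _ ≤ _ := by
        have : 0 ≤ C1 * M * Real.exp (δ * t) := by positivity
        nlinarith

lemma iterD_add {n : ℕ} {U : Set (SpaceTime n)} (hU : IsOpen U) {v w : SpaceTime n → ℂ}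
    (hv : ContDiffOn ℝ ∞ v U) (hw : ContDiffOn ℝ ∞ w U) (L : List (Option (Fin n))) :
    EqOn (iterD n L (v + w)) (iterD n L v + iterD n L w) U := by
  induction L with
  | nil => exact fun _ _ => rfl
  | cons o L ih =>
    intro p hp
    have := pderivDir_congr hU ih (dirv n o) hp
    change pderivDir n _ (iterD n L (v + w)) p = _
    rw [this]
    simp only [pderivDir]
    rw [fderiv_add (smooth_diffAt hU (iterD_smooth hU hv L) hp)
      (smooth_diffAt hU (iterD_smooth hU hw L) hp)]
    rfl

lemma iterD_neg {n : ℕ} (v : SpaceTime n → ℂ) (L : List (Option (Fin n))) :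
    iterD n L (-v) = - iterD n L v := by
  induction L with
  | nil => rfl
  | cons o L ih =>
    change pderivDir n _ (iterD n L (-v)) = _
    rw [ih]
    funext p
    simp only [pderivDir]
    rw [fderiv_neg]
    rfl

lemma Good.neg {n : ℕ} {T δ : ℝ} {v : SpaceTime n → ℂ} (h : Good n T δ v) : Good n T δ (-v) := by
  refine ⟨h.smooth.neg, fun L T' hT' => ?_⟩
  obtain ⟨C, h0, hC⟩ := h.bd L T' hT'
  refine ⟨C, h0, fun x t ht => ?_⟩
  rw [iterD_neg]
  simpa using hC x t ht

lemma Good.add {n : ℕ} {T δ : ℝ} {v w : SpaceTime n → ℂ} (h : Good n T δ v) (h' : Good n T δ w) :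
    Good n T δ (v + w) := by
  refine ⟨h.smooth.add h'.smooth, fun L T' hT' => ?_⟩
  obtain ⟨C, h0, hC⟩ := h.bd L T' hT'
  obtain ⟨C', h0', hC'⟩ := h'.bd L T' hT'
  refine ⟨C + C', by positivity, fun x t ht => ?_⟩
  rw [iterD_add (HSp_open n T) h.smooth h'.smooth L (show ((x, t) : SpaceTime n) ∈ HSp n T from
    lt_of_le_of_lt ht hT'), add_mul]
  exact (norm_add_le _ _).trans (add_le_add (hC x t ht) (hC' x t ht))

lemma Good.zero {n : ℕ} {T δ : ℝ} : Good n T δ (0 : SpaceTime n → ℂ) := by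
  have : ∀ L, iterD n L (0 : SpaceTime n → ℂ) = 0 := by
    intro L
    induction L with
    | nil => rfl
    | cons o L ih =>
      change pderivDir n _ (iterD n L 0) = _
      rw [ih]; funext p; simp [pderivDir]
  refine ⟨contDiffOn_const, fun L T' hT' => ⟨0, le_rfl, fun x t ht => ?_⟩⟩
  rw [this]; simp

lemma Good.sum {n : ℕ} {T δ : ℝ} {ι : Type*} (s : Finset ι) (f : ι → SpaceTime n → ℂ)
    (h : ∀ i, Good n T δ (f i)) : Good n T δ (∑ i ∈ s, f i) := by
  classical
  induction s using Finset.induction_on with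
  | empty => simpa using Good.zero
  | insert a s ha ih => rw [Finset.sum_insert ha]; exact (h a).add ih

lemma Good.pderiv {n : ℕ} {T δ : ℝ} {v : SpaceTime n → ℂ} (h : Good n T δ v) (o : Option (Fin n)) :
    Good n T δ (pderivDir n (dirv n o) v) := by
  refine ⟨pderivDir_smooth (HSp_open n T) h.smooth _, fun L T' hT' => ?_⟩
  have := h.bd (L ++ [o]) T' hT'
  rw [iterD_append] at this
  exact this

lemma heatOp_eq (n : ℕ) (v : SpaceTime n → ℂ) :
    heatOp n v = pderivDir n (dirv n none) v +
      -(∑ i : Fin n, pderivDir n (dirv n (some i)) (pderivDir n (dirv n (some i)) v)) := by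
  funext p
  simp [heatOp, dirv, Finset.sum_apply, sub_eq_add_neg]

lemma Good.heat {n : ℕ} {T δ : ℝ} {v : SpaceTime n → ℂ} (h : Good n T δ v) :
    Good n T δ (heatOp n v) := by
  rw [heatOp_eq]
  exact (h.pderiv none).add (Good.sum _ _ fun i => (h.pderiv (some i)).pderiv (some i)).neg

/-- vanishing on an open set is inherited by derivatives -/
lemma pderiv_vanish {n : ℕ} {U : Set (SpaceTime n)} (hU : IsOpen U) {v : SpaceTime n → ℂ}
    (h : EqOn v 0 U) (e : SpaceTime n) : EqOn (pderivDir n e v) 0 U := by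
  intro p hp
  rw [pderivDir_congr hU h e hp]; simp [pderivDir]

lemma heat_vanish {n : ℕ} {U : Set (SpaceTime n)} (hU : IsOpen U) {v : SpaceTime n → ℂ}
    (h : EqOn v 0 U) : EqOn (heatOp n v) 0 U := by
  intro p hp
  simp only [heatOp]
  rw [pderiv_vanish hU h _ hp]
  simp only [Pi.zero_apply, zero_sub, neg_eq_zero]
  apply Finset.sum_eq_zero
  intro i _
  exact pderiv_vanish hU (pderiv_vanish hU h _) _ hp

end Part1

section Part2

open scoped ContDiff

lemma sqNorm_nonneg' {n : ℕ} (z : Fin n → ℝ) : 0 ≤ sqNorm z :=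
  Finset.sum_nonneg fun i _ => sq_nonneg _

lemma norm_sq_le_sqNorm {n : ℕ} (z : Fin n → ℝ) : ‖z‖ ^ 2 ≤ sqNorm z := by
  have h0 := sqNorm_nonneg' z
  have : ‖z‖ ≤ √(sqNorm z) := by
    rw [pi_norm_le_iff_of_nonneg (Real.sqrt_nonneg _)]
    intro i
    rw [Real.norm_eq_abs]
    apply Real.abs_le_sqrt
    exact Finset.single_le_sum (f := fun i => z i ^ 2) (fun i _ => sq_nonneg _) (Finset.mem_univ i)
  calc ‖z‖ ^ 2 ≤ √(sqNorm z) ^ 2 := by gcongr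
    _ = _ := Real.sq_sqrt h0

lemma sqNorm_continuous {n : ℕ} : Continuous (sqNorm : (Fin n → ℝ) → ℝ) := by
  unfold sqNorm; fun_prop

lemma gauss_int {n : ℕ} {b : ℝ} (hb : 0 < b) :
    Integrable (fun z : Fin n → ℝ => Real.exp (-b * sqNorm z)) := by
  have := Integrable.fintype_prod (ι := Fin n) (μ := fun _ => (volume : Measure ℝ))
    (f := fun _ x => Real.exp (-b * x ^ 2)) (fun _ => integrable_exp_neg_mul_sq hb)
  have e : (fun z : Fin n → ℝ => Real.exp (-b * sqNorm z)) =
      fun z => ∏ i, Real.exp (-b * z i ^ 2) := by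
    funext z
    rw [← Real.exp_sum, sqNorm, Finset.mul_sum]
  rw [e]
  exact this

lemma hk_eq (n : ℕ) (z : Fin n → ℝ) : heatKernel n 1 z =
    (4 * π * 1) ^ (-(n : ℝ) / 2) * Real.exp (-(1/4) * sqNorm z) := by
  unfold heatKernel; congr 2; ring

lemma hk_nonneg (n : ℕ) (z : Fin n → ℝ) : 0 ≤ heatKernel n 1 z := by
  rw [hk_eq]; positivity

lemma hk_cont (n : ℕ) : Continuous (heatKernel n 1) := by
  have : heatKernel n 1 = fun z => (4 * π * 1) ^ (-(n : ℝ) / 2) * Real.exp (-(1/4) * sqNorm z) :=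
    funext (hk_eq n)
  rw [this]
  exact continuous_const.mul (Real.continuous_exp.comp (continuous_const.mul sqNorm_continuous))

lemma hk_mul_exp (n : ℕ) :
    Integrable (fun z : Fin n → ℝ => heatKernel n 1 z * Real.exp (sqNorm z / 8)) := by
  have : (fun z : Fin n → ℝ => heatKernel n 1 z * Real.exp (sqNorm z / 8)) =
    fun z => (4 * π * 1) ^ (-(n : ℝ) / 2) * Real.exp (-(1/8) * sqNorm z) := by
    funext z
    rw [hk_eq, mul_assoc, ← Real.exp_add]; congr 2; ring
  rw [this]
  exact (gauss_int (by norm_num)).const_mul _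

lemma hk_int (n : ℕ) : Integrable (heatKernel n 1) := by
  refine (hk_mul_exp n).mono' (hk_cont n).aestronglyMeasurable (ae_of_all _ fun z => ?_)
  rw [Real.norm_of_nonneg (hk_nonneg n z)]
  have := Real.one_le_exp (show 0 ≤ sqNorm z / 8 by have := sqNorm_nonneg' z; positivity)
  nlinarith [hk_nonneg n z]

lemma hk_mul_norm (n : ℕ) : Integrable (fun z : Fin n → ℝ => heatKernel n 1 z * ‖z‖) := by
  refine ((hk_mul_exp n).const_mul 8).mono' ((hk_cont n).mul continuous_norm).aestronglyMeasurable
    (ae_of_all _ fun z => ?_)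
  rw [Real.norm_of_nonneg (mul_nonneg (hk_nonneg n z) (norm_nonneg _))]
  have h1 := Real.add_one_le_exp (sqNorm z / 8)
  have h2 := norm_sq_le_sqNorm z
  have h3 : ‖z‖ ≤ 8 * Real.exp (sqNorm z / 8) := by nlinarith [sq_nonneg (‖z‖ - 1)]
  calc _ ≤ heatKernel n 1 z * (8 * Real.exp (sqNorm z / 8)) :=
        mul_le_mul_of_nonneg_left h3 (hk_nonneg n z)
    _ = _ := by ring

/-- Rescaled evolution semigroup. -/
def EE (n : ℕ) (v : SpaceTime n → ℂ) (τ : ℝ) (p : SpaceTime n) : ℂ :=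
  ∫ z : Fin n → ℝ, (heatKernel n 1 z : ℂ) * v (p - (√τ • z, τ))

lemma hk_scale (n : ℕ) {τ : ℝ} (hτ : 0 < τ) (z : Fin n → ℝ) :
    √τ ^ n * heatKernel n τ (√τ • z) = heatKernel n 1 z := by
  unfold heatKernel
  have h1 : sqNorm (√τ • z) = τ * sqNorm z := by
    simp only [sqNorm, Pi.smul_apply, smul_eq_mul, mul_pow, Real.sq_sqrt hτ.le, Finset.mul_sum]
  rw [h1, ← mul_assoc]
  congr 1
  · rw [Real.mul_rpow (by positivity) hτ.le, mul_one, Real.sqrt_eq_rpow, ← Real.rpow_natCast,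
      ← Real.rpow_mul hτ.le, mul_left_comm, ← Real.rpow_add hτ]
    have : 1 / 2 * (n : ℝ) + -(n : ℝ) / 2 = 0 := by ring
    rw [this]; simp
  · congr 1; field_simp

lemma heatSemigroup_eq (n : ℕ) (v : SpaceTime n → ℂ) {τ : ℝ} (hτ : 0 < τ) (p : SpaceTime n) :
    heatSemigroup n τ v p = EE n v τ p := by
  unfold heatSemigroup EE
  rw [← integral_sub_left_eq_self _ volume p.1]
  have h := Measure.integral_comp_smul (volume : Measure (Fin n → ℝ))
    (fun y : Fin n → ℝ => (heatKernel n τ y : ℂ) * v (p.1 - y, p.2 - τ)) (√τ)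
  have hs : 0 < √τ := Real.sqrt_pos.mpr hτ
  simp only [sub_sub_cancel]
  rw [Module.finrank_fin_fun, abs_of_pos (by positivity), eq_comm, inv_smul_eq_iff₀ (by positivity)] at h
  rw [h, ← integral_smul]
  congr 1
  funext z
  rw [← hk_scale n hτ z, Complex.real_smul]
  push_cast
  rw [mul_assoc]
  rfl

lemma slice_cont {n : ℕ} {T δ : ℝ} {v : SpaceTime n → ℂ} (h : Good n T δ v) (p : SpaceTime n)
    (a τ : ℝ) (ht : p.2 - τ < T) : Continuous (fun z : Fin n → ℝ => v (p - (a • z, τ))) := by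
  apply h.smooth.continuousOn.comp_continuous (by fun_prop)
  intro z; exact ht

lemma hkv_meas {n : ℕ} {T δ : ℝ} {v : SpaceTime n → ℂ} (h : Good n T δ v) (p : SpaceTime n)
    (a τ : ℝ) (ht : p.2 - τ < T) :
    Continuous (fun z : Fin n → ℝ => (heatKernel n 1 z : ℂ) * v (p - (a • z, τ))) :=
  (Complex.continuous_ofReal.comp (hk_cont n)).mul (slice_cont h p a τ ht)

lemma Good.bd0 {n : ℕ} {T δ : ℝ} {v : SpaceTime n → ℂ} (h : Good n T δ v) {T' : ℝ} (hT : T' < T) :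
    ∃ C : ℝ, 0 ≤ C ∧ ∀ q : SpaceTime n, q.2 ≤ T' → ‖v q‖ ≤ C * Real.exp (δ * q.2) := by
  obtain ⟨C, h0, hC⟩ := h.bd [] T' hT
  exact ⟨C, h0, fun q hq => hC q.1 q.2 hq⟩

lemma Good.bd1 {n : ℕ} {T δ : ℝ} {v : SpaceTime n → ℂ} (hδ : 0 < δ) (h : Good n T δ v) {T' : ℝ}
    (hT : T' < T) :
    ∃ C : ℝ, 0 ≤ C ∧ ∀ q : SpaceTime n, q.2 ≤ T' → ‖v q‖ ≤ C := by
  obtain ⟨C, h0, hC⟩ := h.bd0 hT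
  refine ⟨C * Real.exp (δ * T'), by positivity, fun q hq => (hC q hq).trans ?_⟩
  gcongr

lemma hkv_int {n : ℕ} {T δ : ℝ} {v : SpaceTime n → ℂ} (hδ : 0 < δ) (h : Good n T δ v)
    (p : SpaceTime n) (a τ : ℝ) (ht : p.2 - τ < T) :
    Integrable (fun z : Fin n → ℝ => (heatKernel n 1 z : ℂ) * v (p - (a • z, τ))) := by
  obtain ⟨C, h0, hC⟩ := h.bd1 hδ ht
  refine ((hk_int n).mul_const C).mono' (hkv_meas h p a τ ht).aestronglyMeasurable
    (ae_of_all _ fun z => ?_)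
  rw [norm_mul, Complex.norm_real, Real.norm_of_nonneg (hk_nonneg n z)]
  exact mul_le_mul_of_nonneg_left (hC _ le_rfl) (hk_nonneg n z)

lemma dirv_snd_le {n : ℕ} (o : Option (Fin n)) : |(dirv n o).2| ≤ 1 := by
  cases o <;> simp [dirv, eTime, eSpace]

/-- Differentiating the semigroup in a space-time direction. -/
lemma EE_deriv_dir {n : ℕ} {T δ : ℝ} {v : SpaceTime n → ℂ} (hδ : 0 < δ) (h : Good n T δ v)
    (p : SpaceTime n) {τ : ℝ} (hτ : 0 < τ) (o : Option (Fin n)) (r₀ : ℝ)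
    (hp : (p + r₀ • dirv n o).2 < T) :
    HasDerivAt (fun r : ℝ => EE n v τ (p + r • dirv n o))
      (EE n (pderivDir n (dirv n o) v) τ (p + r₀ • dirv n o)) r₀ := by
  set e := dirv n o with he
  have h' := h.pderiv o
  rw [← he] at h'
  set ε := (T - (p + r₀ • e).2) / 2 with hε
  have hε0 : 0 < ε := by rw [hε]; linarith
  have htime : ∀ r ∈ Metric.ball r₀ ε, (p + r • e).2 ≤ (p + r₀ • e).2 + ε := by
    intro r hr
    rw [Metric.mem_ball, Real.dist_eq] at hr
    have h1 := dirv_snd_le o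
    rw [← he] at h1
    simp only [Prod.snd_add, Prod.smul_snd, smul_eq_mul]
    have : (r - r₀) * e.2 ≤ ε := by
      calc (r - r₀) * e.2 ≤ |(r - r₀) * e.2| := le_abs_self _
        _ = |r - r₀| * |e.2| := abs_mul _ _
        _ ≤ ε * 1 := by gcongr
        _ = ε := mul_one _
    linarith
  have hT' : (p + r₀ • e).2 + ε < T := by rw [hε]; linarith
  obtain ⟨C, hC0, hC⟩ := h'.bd1 hδ hT'
  refine (hasDerivAt_integral_of_dominated_loc_of_deriv_le (s := Metric.ball r₀ ε)
    (F := fun r z => (heatKernel n 1 z : ℂ) * v (p + r • e - (√τ • z, τ)))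
    (F' := fun r z => (heatKernel n 1 z : ℂ) * pderivDir n e v (p + r • e - (√τ • z, τ)))
    (bound := fun z => heatKernel n 1 z * C) (Metric.ball_mem_nhds _ hε0) ?_ ?_ ?_ ?_ ?_ ?_).2
  · filter_upwards [Metric.ball_mem_nhds r₀ hε0] with r hr
    exact (hkv_meas h _ _ _ (by have := htime r hr; linarith)).aestronglyMeasurable
  · exact hkv_int hδ h _ _ _ (by linarith)
  · exact (hkv_meas h' _ _ _ (by linarith)).aestronglyMeasurable
  · refine ae_of_all _ fun z r hr => ?_
    rw [norm_mul, Complex.norm_real, Real.norm_of_nonneg (hk_nonneg n z)]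
    refine mul_le_mul_of_nonneg_left (hC _ ?_) (hk_nonneg n z)
    have := htime r hr
    simp only [Prod.snd_sub]; linarith
  · exact (hk_int n).mul_const C
  · refine ae_of_all _ fun z r hr => ?_
    apply HasDerivAt.const_mul
    have hin : p + r • e - (√τ • z, τ) ∈ HSp n T := by
      have := htime r hr
      change (p + r • e).2 - τ < T
      linarith
    have hd := (smooth_diffAt (HSp_open n T) h.smooth hin).hasFDerivAt
    have hc : HasDerivAt (fun r : ℝ => p + r • e - (√τ • z, τ)) e r := by
      have := (((hasDerivAt_id r).smul_const e).const_add p).sub_const ((√τ • z, τ) : SpaceTime n)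
      simpa using this
    exact hd.comp_hasDerivAt r hc

lemma hk_fderiv (n : ℕ) (z : Fin n → ℝ) (i : Fin n) :
    DifferentiableAt ℝ (fun z => (heatKernel n 1 z : ℂ)) z ∧
    fderiv ℝ (fun z => (heatKernel n 1 z : ℂ)) z (Pi.single i 1) = -(z i / 2 : ℝ) * heatKernel n 1 z := by
  have hd0 : Differentiable ℝ (fun z : Fin n → ℝ => heatKernel n 1 z) := by
    unfold heatKernel sqNorm; fun_prop
  have hd : DifferentiableAt ℝ (fun z => (heatKernel n 1 z : ℂ)) z :=
    Complex.ofRealCLM.differentiableAt.comp z (hd0 z)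
  refine ⟨hd, ?_⟩
  rw [← hd.lineDeriv_eq_fderiv]
  apply HasLineDerivAt.lineDeriv
  unfold HasLineDerivAt
  have h1 : ∀ t : ℝ, sqNorm (z + t • (Pi.single i 1 : Fin n → ℝ)) = sqNorm z + 2 * t * z i + t ^ 2 := by
    intro t
    have : ∀ j, (z + t • (Pi.single i 1 : Fin n → ℝ)) j ^ 2 =
        z j ^ 2 + (if j = i then 2 * t * z i + t ^ 2 else 0) := by
      intro j
      by_cases hj : j = i
      · subst hj; simp; ring
      · simp [hj]
    simp only [sqNorm, this, Finset.sum_add_distrib]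
    simp; ring
  simp only [hk_eq, h1]
  have h2 : HasDerivAt (fun t : ℝ => (4 * π * 1) ^ (-(n : ℝ) / 2) *
      Real.exp (-(1/4) * (sqNorm z + 2 * t * z i + t ^ 2)))
      (-(z i / 2) * ((4 * π * 1) ^ (-(n : ℝ) / 2) * Real.exp (-(1/4) * sqNorm z))) 0 := by
    have h3 : HasDerivAt (fun t : ℝ => -(1/4) * (sqNorm z + 2 * t * z i + t ^ 2))
        (-(1/4) * (2 * z i)) 0 := by
      have h4 : HasDerivAt (fun t : ℝ => sqNorm z + 2 * t * z i + t ^ 2) (2 * z i) 0 := by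
        have := ((((hasDerivAt_id (0:ℝ)).const_mul 2).mul_const (z i)).const_add (sqNorm z)).add
          ((hasDerivAt_id (0:ℝ)).pow 2)
        refine this.congr_deriv ?_
        simp
      exact h4.const_mul _
    refine (h3.exp.const_mul _).congr_deriv ?_
    simp only [mul_zero, zero_mul, add_zero]
    norm_num
    ring
  refine (h2.ofReal_comp).congr_deriv ?_
  push_cast; ring

/-- Gaussian integration by parts in direction `i`. -/
lemma gauss_ibp {n : ℕ} {T δ : ℝ} {v : SpaceTime n → ℂ} (hδ : 0 < δ) (h : Good n T δ v)
    (p : SpaceTime n) (hp : p.2 < T) {τ : ℝ} (hτ : 0 < τ) (i : Fin n) :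
    Integrable (fun z : Fin n → ℝ => (heatKernel n 1 z : ℂ) * ((z i : ℝ) * v (p - (√τ • z, τ)))) ∧
    ∫ z : Fin n → ℝ, (heatKernel n 1 z : ℂ) * ((z i : ℝ) * v (p - (√τ • z, τ))) =
      -(2 * √τ : ℝ) * EE n (pderivDir n (dirv n (some i)) v) τ p := by
  have ht : p.2 - τ < T := by linarith
  obtain ⟨C, h0, hC⟩ := h.bd1 hδ ht
  have hI : Integrable (fun z : Fin n → ℝ => (heatKernel n 1 z : ℂ) * ((z i : ℝ) * v (p - (√τ • z, τ)))) := by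
    refine ((hk_mul_norm n).mul_const C).mono' ?_ (ae_of_all _ fun z => ?_)
    · apply Continuous.aestronglyMeasurable
      have := slice_cont h p (√τ) τ ht
      have h2 := Complex.continuous_ofReal.comp (hk_cont n)
      refine h2.mul (Continuous.mul (by fun_prop) this)
    · rw [norm_mul, norm_mul, Complex.norm_real, Complex.norm_real,
        Real.norm_of_nonneg (hk_nonneg n z), mul_assoc]
      have := hk_nonneg n z
      gcongr
      · exact norm_le_pi_norm z i
      · exact hC _ le_rfl
  refine ⟨hI, ?_⟩
  have hG : ∀ z : Fin n → ℝ, HasFDerivAt (fun z : Fin n → ℝ => v (p - (√τ • z, τ)))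
      ((fderiv ℝ v (p - (√τ • z, τ))).comp
        (-(√τ • ContinuousLinearMap.inl ℝ (Fin n → ℝ) ℝ))) z := by
    intro z
    have hin : p - (√τ • z, τ) ∈ HSp n T := ht
    have hd := (smooth_diffAt (HSp_open n T) h.smooth hin).hasFDerivAt
    refine hd.comp z ?_
    have h1 : HasFDerivAt (fun z : Fin n → ℝ => p - (0, τ) + (-(√τ • ContinuousLinearMap.inl ℝ (Fin n → ℝ) ℝ)) z)
        (-(√τ • ContinuousLinearMap.inl ℝ (Fin n → ℝ) ℝ)) z :=
      (ContinuousLinearMap.hasFDerivAt _).const_add _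
    have e : (fun z : Fin n → ℝ => p - (√τ • z, τ)) =
        fun z => p - (0, τ) + (-(√τ • ContinuousLinearMap.inl ℝ (Fin n → ℝ) ℝ)) z := by
      funext z
      ext <;> simp [sub_eq_add_neg]
    rw [e]
    exact h1
  have hG' : ∀ z : Fin n → ℝ, fderiv ℝ (fun z : Fin n → ℝ => v (p - (√τ • z, τ))) z (Pi.single i 1) =
      -(√τ : ℝ) * pderivDir n (dirv n (some i)) v (p - (√τ • z, τ)) := by
    intro z
    rw [(hG z).fderiv]
    simp only [ContinuousLinearMap.comp_apply, pderivDir, dirv, eSpace]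
    have e : (-(√τ • ContinuousLinearMap.inl ℝ (Fin n → ℝ) ℝ)) (Pi.single i 1) =
        (-√τ) • ((Pi.single i 1, 0) : SpaceTime n) := by
      ext <;> simp
    rw [e, map_smul, Complex.real_smul]
    push_cast; ring
  have hib := integral_mul_fderiv_eq_neg_fderiv_mul_of_integrable (μ := (volume : Measure (Fin n → ℝ)))
    (f := fun z => (heatKernel n 1 z : ℂ)) (g := fun z : Fin n → ℝ => v (p - (√τ • z, τ)))
    (v := Pi.single i 1) ?_ ?_ (hkv_int hδ h p _ _ ht)
    (fun z _ => (hk_fderiv n z i).1) (fun z _ => (hG z).differentiableAt)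
  · simp only [hG', (hk_fderiv n _ i).2] at hib
    have e1 : (fun z : Fin n → ℝ => (heatKernel n 1 z : ℂ) * (-(√τ : ℝ) *
        pderivDir n (dirv n (some i)) v (p - (√τ • z, τ)))) = fun z => (-(√τ : ℝ) : ℂ) *
        ((heatKernel n 1 z : ℂ) * pderivDir n (dirv n (some i)) v (p - (√τ • z, τ))) := by
      funext z; ring
    have e2 : (fun z : Fin n → ℝ => -((z i / 2 : ℝ) : ℂ) * (heatKernel n 1 z : ℂ) * v (p - (√τ • z, τ))) =
        fun z => (-(1/2) : ℂ) * ((heatKernel n 1 z : ℂ) * ((z i : ℝ) * v (p - (√τ • z, τ)))) := by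
      funext z; push_cast; ring
    rw [e1, e2, integral_const_mul, integral_const_mul] at hib
    unfold EE
    push_cast
    linear_combination (-2) * hib
  · simp only [(hk_fderiv n _ i).2]
    convert hI.const_mul (-(1/2) : ℂ) using 2 with z
    push_cast; ring
  · simp only [hG']
    convert (hkv_int hδ (h.pderiv (some i)) p (√τ) τ ht).const_mul (-(√τ : ℝ) : ℂ) using 2 with z
    ring

lemma fderiv_expand {n : ℕ} (v : SpaceTime n → ℂ) (q : SpaceTime n) (z : Fin n → ℝ) (a c : ℝ) :
    fderiv ℝ v q (a • z, c) = c * pderivDir n (dirv n none) v q +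
      a * ∑ i, (z i : ℂ) * pderivDir n (dirv n (some i)) v q := by
  have : ((a • z, c) : SpaceTime n) = c • dirv n none + a • ∑ i, z i • dirv n (some i) := by
    ext j
    · simp [dirv, eTime, eSpace, Prod.fst_sum, Finset.sum_apply, Pi.single_apply]
    · simp [dirv, eTime, eSpace, Prod.snd_sum]
  rw [this, map_add, map_smul, map_smul, map_sum]
  simp only [map_smul, Complex.real_smul]
  rfl

/-- `∂_τ e^{-τ𝓗} v = - e^{-τ𝓗} 𝓗 v`. -/
lemma EE_deriv_tau {n : ℕ} {T δ : ℝ} {v : SpaceTime n → ℂ} (hδ : 0 < δ) (h : Good n T δ v)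
    (p : SpaceTime n) (hp : p.2 < T) {τ : ℝ} (hτ : 0 < τ) :
    HasDerivAt (fun τ => EE n v τ p) (-(EE n (heatOp n v) τ p)) τ := by
  have hall : ∀ o, ∃ C : ℝ, 0 ≤ C ∧ ∀ q : SpaceTime n, q.2 ≤ p.2 → ‖pderivDir n (dirv n o) v q‖ ≤ C :=
    fun o => (h.pderiv o).bd1 hδ hp
  choose C hC0 hC using hall
  have hs2 : 0 < √(τ / 2) := Real.sqrt_pos.mpr (by linarith)
  have hmain := hasDerivAt_integral_of_dominated_loc_of_deriv_le (s := Ioi (τ / 2)) (x₀ := τ)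
    (μ := (volume : Measure (Fin n → ℝ)))
    (F := fun τ z => (heatKernel n 1 z : ℂ) * v (p - (√τ • z, τ)))
    (F' := fun τ z => (heatKernel n 1 z : ℂ) * fderiv ℝ v (p - (√τ • z, τ)) ((-(1 / (2 * √τ))) • z, -1))
    (bound := fun z => heatKernel n 1 z * C none +
      (heatKernel n 1 z * ‖z‖) * ((1 / (2 * √(τ / 2))) * ∑ i, C (some i)))
    (Ioi_mem_nhds (by linarith)) ?_ (hkv_int hδ h _ _ _ (by linarith)) ?_ ?_ ?_ ?_
  · have h2 := hmain.2
    refine h2.congr_deriv ?_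
    have hs : 0 < √τ := Real.sqrt_pos.mpr hτ
    have e1 : ∀ z : Fin n → ℝ, (heatKernel n 1 z : ℂ) *
        fderiv ℝ v (p - (√τ • z, τ)) ((-(1 / (2 * √τ))) • z, -1) =
        -((heatKernel n 1 z : ℂ) * pderivDir n (dirv n none) v (p - (√τ • z, τ))) +
        ∑ i, (-(1 / (2 * √τ)) : ℝ) * ((heatKernel n 1 z : ℂ) * ((z i : ℝ) *
          pderivDir n (dirv n (some i)) v (p - (√τ • z, τ)))) := by
      intro z
      rw [fderiv_expand, ← Finset.mul_sum, ← Finset.mul_sum]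
      push_cast; ring
    simp only [e1]
    have hInt : ∀ i : Fin n, Integrable (fun z : Fin n → ℝ => ((-(1 / (2 * √τ)) : ℝ) : ℂ) *
        ((heatKernel n 1 z : ℂ) * ((z i : ℝ) *
          pderivDir n (dirv n (some i)) v (p - (√τ • z, τ))))) := fun i =>
      (gauss_ibp hδ (h.pderiv (some i)) p hp hτ i).1.const_mul _
    have hi0 := hkv_int hδ (h.pderiv none) p (√τ) τ (by linarith)
    rw [integral_add (f := fun z => -((heatKernel n 1 z : ℂ) *
        pderivDir n (dirv n none) v (p - (√τ • z, τ)))) hi0.neg (integrable_finsetSum _ fun i _ => hInt i),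
      integral_finsetSum _ fun i _ => hInt i, integral_neg]
    have hEE : EE n (heatOp n v) τ p = EE n (pderivDir n (dirv n none) v) τ p -
        ∑ i, EE n (pderivDir n (dirv n (some i)) (pderivDir n (dirv n (some i)) v)) τ p := by
      unfold EE
      rw [← integral_finsetSum, ← integral_sub hi0]
      · congr 1; funext z
        simp only [heatOp, dirv]
        rw [← Finset.mul_sum]; ring
      · exact integrable_finsetSum _ fun i _ =>
          hkv_int hδ ((h.pderiv (some i)).pderiv (some i)) p (√τ) τ (by linarith)
      · exact fun i _ => hkv_int hδ ((h.pderiv (some i)).pderiv (some i)) p (√τ) τ (by linarith)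
    rw [hEE, neg_sub, sub_eq_add_neg, add_comm]
    congr 1
    apply Finset.sum_congr rfl
    intro i _
    rw [integral_const_mul, (gauss_ibp hδ (h.pderiv (some i)) p hp hτ i).2, ← mul_assoc,
      ← Complex.ofReal_neg, ← Complex.ofReal_mul]
    have : -(1 / (2 * √τ)) * -(2 * √τ) = 1 := by field_simp
    rw [this]; simp
  · filter_upwards [Ioi_mem_nhds hτ] with r hr
    exact (hkv_meas h _ _ _ (by rw [mem_Ioi] at hr; linarith)).aestronglyMeasurable
  · apply Continuous.aestronglyMeasurable
    simp only [fderiv_expand]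
    have hk := Complex.continuous_ofReal.comp (hk_cont n)
    have := fun o => slice_cont (h.pderiv o) p (√τ) τ (by linarith)
    refine hk.mul ((continuous_const.mul (this none)).add (continuous_const.mul
      (continuous_finsetSum _ fun i _ => Continuous.mul (by fun_prop) (this _))))
  · refine ae_of_all _ fun z r hr => ?_
    have hr0 : τ / 2 < r := hr
    rw [norm_mul, Complex.norm_real, Real.norm_of_nonneg (hk_nonneg n z), fderiv_expand]
    have hq : (p - (√r • z, r)).2 ≤ p.2 := by simp; linarith
    have hb : ‖((-1 : ℝ) : ℂ) * pderivDir n (dirv n none) v (p - (√r • z, r)) +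
        ((-(1 / (2 * √r)) : ℝ) : ℂ) * ∑ i, (z i : ℂ) * pderivDir n (dirv n (some i)) v (p - (√r • z, r))‖ ≤
        C none + (1 / (2 * √(τ / 2))) * ∑ i, ‖z‖ * C (some i) := by
      refine (norm_add_le _ _).trans (add_le_add ?_ ?_)
      · simpa using hC none _ hq
      · rw [norm_mul, Complex.norm_real, norm_neg, Real.norm_of_nonneg (by positivity)]
        gcongr
        refine (norm_sum_le _ _).trans (Finset.sum_le_sum fun i _ => ?_)
        rw [norm_mul, Complex.norm_real]
        have := hC (some i) _ hq
        gcongr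
        exact norm_le_pi_norm z i
    refine (mul_le_mul_of_nonneg_left hb (hk_nonneg n z)).trans (le_of_eq ?_)
    rw [← Finset.mul_sum]; ring
  · exact ((hk_int n).mul_const _).add ((hk_mul_norm n).mul_const _)
  · refine ae_of_all _ fun z r hr => ?_
    have hr0 : 0 < r := by have : τ / 2 < r := hr; linarith
    apply HasDerivAt.const_mul
    have hin : p - (√r • z, r) ∈ HSp n T := by
      change p.2 - r < T
      linarith
    have hd := (smooth_diffAt (HSp_open n T) h.smooth hin).hasFDerivAt
    have hc : HasDerivAt (fun r : ℝ => p - (√r • z, r)) ((-(1 / (2 * √r))) • z, -1) r := by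
      have h1 : HasDerivAt (fun r : ℝ => ((√r • z, r) : SpaceTime n)) ((1 / (2 * √r)) • z, 1) r :=
        ((Real.hasDerivAt_sqrt hr0.ne').smul_const z).prodMk (hasDerivAt_id r)
      refine (h1.const_sub p).congr_deriv ?_
      ext <;> simp
    exact hd.comp_hasDerivAt r hc

end Part2

section Part3

open scoped ContDiff
open Filter Topology

lemma exp_bound {c : ℝ} (hc : 0 < c) (a : ℝ) : ∃ K b : ℝ, 0 ≤ K ∧ 1 ≤ b ∧ ∀ τ : ℝ, 0 < τ →
    Real.exp (-c / τ) * τ ^ a ≤ K * τ ^ b := by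
  obtain ⟨N, hN⟩ := exists_nat_ge (1 - a)
  refine ⟨(N.factorial : ℝ) / c ^ N, N + a, by positivity, by linarith, fun τ hτ => ?_⟩
  have h1 := Real.pow_div_factorial_le_exp (x := c / τ) (by positivity) N
  have h2 : Real.exp (-c / τ) ≤ (N.factorial : ℝ) / c ^ N * τ ^ N := by
    rw [neg_div, Real.exp_neg, inv_le_comm₀ (Real.exp_pos _) (by positivity)]
    refine le_trans (le_of_eq ?_) h1
    rw [div_pow]; field_simp
  rw [Real.rpow_add hτ, Real.rpow_natCast, ← mul_assoc]
  gcongr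

lemma dom_int {c δ : ℝ} (hc : 0 < c) (hδ : 0 < δ) (a : ℝ) :
    IntegrableOn (fun τ : ℝ => Real.exp (-c / τ) * Real.exp (-(δ * τ)) * τ ^ a) (Ioi 0) := by
  obtain ⟨K, b, hK, hb, h⟩ := exp_bound hc a
  have h1 := (integrableOn_rpow_mul_exp_neg_mul_rpow (p := 1) (s := b) (b := δ) (by linarith)
    one_pos hδ).const_mul K
  refine Integrable.mono' h1 ?_ ?_
  · apply ContinuousOn.aestronglyMeasurable _ measurableSet_Ioi
    intro τ hτ
    have hτ' : τ ≠ 0 := ne_of_gt hτ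
    apply ContinuousAt.continuousWithinAt
    have : ContinuousAt (fun τ : ℝ => τ ^ a) τ := Real.continuousAt_rpow_const _ _ (Or.inl hτ')
    refine ContinuousAt.mul (ContinuousAt.mul ?_ (by fun_prop)) this
    exact Real.continuous_exp.continuousAt.comp (ContinuousAt.div continuousAt_const continuousAt_id hτ')
  · refine (ae_restrict_iff' measurableSet_Ioi).mpr (ae_of_all _ fun τ hτ => ?_)
    have hτ0 : 0 < τ := hτ
    rw [Real.norm_of_nonneg (by positivity), Real.rpow_one]
    calc _ = Real.exp (-c / τ) * τ ^ a * Real.exp (-(δ * τ)) := by ring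
      _ ≤ K * τ ^ b * Real.exp (-(δ * τ)) := mul_le_mul_of_nonneg_right (h τ hτ0) (Real.exp_pos _).le
      _ = _ := by rw [neg_mul]; ring

lemma EE_bound {n : ℕ} {T δ : ℝ} (hδ : 0 < δ) {U : Set (SpaceTime n)} (hU : IsOpen U)
    (hUT : ∀ q ∈ U, q.2 < T) {p₀ : SpaceTime n} (hp₀ : p₀ ∈ U) :
    ∃ r > 0, ∃ c > 0, Metric.ball p₀ r ⊆ U ∧ ∀ v, Good n T δ v → EqOn v 0 U →
      ∃ C : ℝ, 0 ≤ C ∧ ∀ p ∈ Metric.ball p₀ r, ∀ τ : ℝ, 0 < τ →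
        ‖EE n v τ p‖ ≤ C * (Real.exp (-c / τ) * Real.exp (-(δ * τ))) := by
  obtain ⟨ρ, hρ, hball⟩ := Metric.isOpen_iff.mp hU p₀ hp₀
  set r := ρ / 2 with hr
  have hr0 : 0 < r := by positivity
  set c := r ^ 2 / 8 with hc
  have hc0 : 0 < c := by positivity
  refine ⟨r, hr0, c, hc0, (Metric.ball_subset_ball (by linarith)).trans hball, fun v hv hvan => ?_⟩
  have hT' : p₀.2 + r < T := by
    have : p₀ + (0, r) ∈ U := by
      apply hball
      rw [Metric.mem_ball, dist_eq_norm]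
      simp only [add_sub_cancel_left, Prod.norm_mk, norm_zero]
      rw [Real.norm_of_nonneg hr0.le, max_eq_right hr0.le]; linarith
    simpa using hUT _ this
  obtain ⟨A, hA0, hA⟩ := hv.bd0 hT'
  set I := ∫ z : Fin n → ℝ, heatKernel n 1 z * Real.exp (sqNorm z / 8) with hI
  have hI0 : 0 ≤ I := integral_nonneg fun z => mul_nonneg (hk_nonneg n z) (Real.exp_pos _).le
  refine ⟨I * (A * Real.exp (δ * (p₀.2 + r)) * Real.exp (c / r)), by positivity, fun p hp τ hτ => ?_⟩
  set B := A * Real.exp (δ * (p₀.2 + r)) * Real.exp (c / r) * (Real.exp (-c / τ) * Real.exp (-(δ * τ)))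
    with hB
  have key : ∀ z : Fin n → ℝ, ‖(heatKernel n 1 z : ℂ) * v (p - (√τ • z, τ))‖ ≤
      heatKernel n 1 z * Real.exp (sqNorm z / 8) * B := by
    intro z
    rw [norm_mul, Complex.norm_real, Real.norm_of_nonneg (hk_nonneg n z), mul_assoc]
    refine mul_le_mul_of_nonneg_left ?_ (hk_nonneg n z)
    rw [Metric.mem_ball, dist_eq_norm] at hp
    by_cases hsmall : √τ * ‖z‖ < r ∧ τ < r
    · have hin : p - (√τ • z, τ) ∈ U := by
        apply hball
        rw [Metric.mem_ball, dist_eq_norm]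
        have e : p - (√τ • z, τ) - p₀ = (p - p₀) - (√τ • z, τ) := by abel
        rw [e]
        refine (norm_sub_le _ _).trans_lt ?_
        have : ‖((√τ • z, τ) : SpaceTime n)‖ < r := by
          rw [Prod.norm_mk, norm_smul, Real.norm_of_nonneg (Real.sqrt_nonneg _),
            Real.norm_of_nonneg hτ.le]
          exact max_lt hsmall.1 hsmall.2
        linarith
      rw [hvan hin]
      simp only [Pi.zero_apply, norm_zero]
      positivity
    · have hp2 : p.2 ≤ p₀.2 + r := by
        have h1 : ‖(p - p₀).2‖ ≤ ‖p - p₀‖ := norm_snd_le _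
        have h2 := le_abs_self (p - p₀).2
        rw [Real.norm_eq_abs] at h1
        simp only [Prod.snd_sub] at h1 h2
        linarith
      have h1 := hA (p - (√τ • z, τ)) (by simp only [Prod.snd_sub]; linarith)
      refine h1.trans ?_
      have h2 : 1 ≤ Real.exp (c / r) * Real.exp (-c / τ) * Real.exp (sqNorm z / 8) := by
        rw [← Real.exp_add, ← Real.exp_add]
        apply Real.one_le_exp
        have hs := sqNorm_nonneg' z
        rw [neg_div]
        rw [not_and_or, not_lt, not_lt] at hsmall
        rcases hsmall with h | h
        · have h3 := norm_sq_le_sqNorm z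
          have h4 : r ^ 2 ≤ τ * ‖z‖ ^ 2 := by
            calc r ^ 2 ≤ (√τ * ‖z‖) ^ 2 := by gcongr
              _ = _ := by rw [mul_pow, Real.sq_sqrt hτ.le]
          have h5 : c / τ ≤ sqNorm z / 8 := by
            rw [hc, div_div, div_le_div_iff₀ (by positivity) (by norm_num)]
            nlinarith
          have : 0 ≤ c / r := by positivity
          linarith
        · have : c / τ ≤ c / r := by gcongr
          linarith [div_nonneg hs (by norm_num : (0:ℝ) ≤ 8)]
      have h3 : Real.exp (δ * (p - (√τ • z, τ)).2) ≤ Real.exp (δ * (p₀.2 + r)) * Real.exp (-(δ * τ)) := by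
        rw [← Real.exp_add]
        apply Real.exp_le_exp.mpr
        simp only [Prod.snd_sub]
        nlinarith
      calc A * Real.exp (δ * (p - (√τ • z, τ)).2) ≤
          A * (Real.exp (δ * (p₀.2 + r)) * Real.exp (-(δ * τ))) * 1 := by
            rw [mul_one]; gcongr
        _ ≤ A * (Real.exp (δ * (p₀.2 + r)) * Real.exp (-(δ * τ))) *
            (Real.exp (c / r) * Real.exp (-c / τ) * Real.exp (sqNorm z / 8)) := by gcongr
        _ = _ := by rw [hB]; ring
  refine (norm_integral_le_of_norm_le ((hk_mul_exp n).mul_const B) (ae_of_all _ key)).trans (le_of_eq ?_)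
  rw [integral_mul_const, ← hI, hB]; ring

/-- The singular integral `∫ (e^{-τ𝓗}v)(p) τ^{-1-s} dτ`. -/
def JJ (n : ℕ) (s : ℝ) (v : SpaceTime n → ℂ) (p : SpaceTime n) : ℂ :=
  ∫ τ in Ioi (0 : ℝ), EE n v τ p * ((τ ^ (-1 - s) : ℝ) : ℂ)

lemma EE_cont {n : ℕ} {T δ : ℝ} {v : SpaceTime n → ℂ} (hδ : 0 < δ) (h : Good n T δ v)
    (p : SpaceTime n) (hp : p.2 < T) : ContinuousOn (fun τ => EE n v τ p) (Ioi 0) := fun _ hτ =>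
  (EE_deriv_tau hδ h p hp hτ).continuousAt.continuousWithinAt

lemma JJ_meas {n : ℕ} {T δ : ℝ} {v : SpaceTime n → ℂ} (hδ : 0 < δ) (h : Good n T δ v)
    (p : SpaceTime n) (hp : p.2 < T) (a : ℝ) :
    AEStronglyMeasurable (fun τ : ℝ => EE n v τ p * ((τ ^ a : ℝ) : ℂ)) (volume.restrict (Ioi 0)) := by
  apply ContinuousOn.aestronglyMeasurable _ measurableSet_Ioi
  refine (EE_cont hδ h p hp).mul ?_
  refine Complex.continuous_ofReal.comp_continuousOn ?_
  intro τ hτ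
  exact (Real.continuousAt_rpow_const _ _ (Or.inl (ne_of_gt hτ))).continuousWithinAt

lemma JJ_int {n : ℕ} {T δ : ℝ} (hδ : 0 < δ) {U : Set (SpaceTime n)} (hU : IsOpen U)
    (hUT : ∀ q ∈ U, q.2 < T) {v : SpaceTime n → ℂ} (hv : Good n T δ v) (h0 : EqOn v 0 U)
    {p : SpaceTime n} (hp : p ∈ U) (a : ℝ) :
    IntegrableOn (fun τ : ℝ => EE n v τ p * ((τ ^ a : ℝ) : ℂ)) (Ioi 0) := by
  obtain ⟨r, hr, c, hc, -, h⟩ := EE_bound (n := n) hδ hU hUT hp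
  obtain ⟨C, hC0, hC⟩ := h v hv h0
  refine Integrable.mono' ((dom_int hc hδ a).const_mul C) (JJ_meas hδ hv p (hUT p hp) a) ?_
  refine (ae_restrict_iff' measurableSet_Ioi).mpr (ae_of_all _ fun τ hτ => ?_)
  have hτ0 : 0 < τ := hτ
  rw [norm_mul, Complex.norm_real, Real.norm_of_nonneg (by positivity), ← mul_assoc]
  exact mul_le_mul_of_nonneg_right (hC p (Metric.mem_ball_self hr) τ hτ0) (by positivity)

lemma JJ_deriv {n : ℕ} {T δ : ℝ} (hδ : 0 < δ) {U : Set (SpaceTime n)} (hU : IsOpen U)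
    (hUT : ∀ q ∈ U, q.2 < T) {v : SpaceTime n → ℂ} (hv : Good n T δ v) (h0 : EqOn v 0 U)
    {p : SpaceTime n} (hp : p ∈ U) (s : ℝ) (o : Option (Fin n)) :
    HasDerivAt (fun r : ℝ => JJ n s v (p + r • dirv n o)) (JJ n s (pderivDir n (dirv n o) v) p) 0 := by
  obtain ⟨r, hr, c, hc, hsub, h⟩ := EE_bound (n := n) hδ hU hUT hp
  have hv' := hv.pderiv o
  have h0' := pderiv_vanish hU h0 (dirv n o)
  obtain ⟨C, hC0, hC⟩ := h _ hv' h0'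
  set S : Set ℝ := (fun r : ℝ => p + r • dirv n o) ⁻¹' Metric.ball p r with hS
  have hSo : IsOpen S := Metric.isOpen_ball.preimage (by fun_prop)
  have hS0 : (0 : ℝ) ∈ S := by simp [hS, hr]
  have key := hasDerivAt_integral_of_dominated_loc_of_deriv_le (s := S) (x₀ := (0 : ℝ))
    (μ := volume.restrict (Ioi (0:ℝ)))
    (F := fun r τ => EE n v τ (p + r • dirv n o) * ((τ ^ (-1 - s) : ℝ) : ℂ))
    (F' := fun r τ => EE n (pderivDir n (dirv n o) v) τ (p + r • dirv n o) * ((τ ^ (-1 - s) : ℝ) : ℂ))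
    (bound := fun τ => C * (Real.exp (-c / τ) * Real.exp (-(δ * τ)) * τ ^ (-1 - s)))
    (hSo.mem_nhds hS0) ?_ ?_ ?_ ?_ ((dom_int hc hδ _).const_mul C) ?_
  · have := key.2
    simp only [zero_smul, add_zero] at this
    exact this
  · filter_upwards [hSo.mem_nhds hS0] with x hx
    exact JJ_meas hδ hv _ (hUT _ (hsub hx)) _
  · exact JJ_int hδ hU hUT hv h0 (hsub hS0) _
  · exact JJ_meas hδ hv' _ (hUT _ (hsub hS0)) _
  · refine (ae_restrict_iff' measurableSet_Ioi).mpr (ae_of_all _ fun τ hτ x hx => ?_)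
    have hτ0 : 0 < τ := hτ
    rw [norm_mul, Complex.norm_real, Real.norm_of_nonneg (by positivity), ← mul_assoc]
    exact mul_le_mul_of_nonneg_right (hC _ hx τ hτ0) (by positivity)
  · refine (ae_restrict_iff' measurableSet_Ioi).mpr (ae_of_all _ fun τ hτ x hx => ?_)
    exact (EE_deriv_dir hδ hv p hτ o x (hUT _ (hsub hx))).mul_const _

lemma JJ_heat {n : ℕ} {T δ : ℝ} (hδ : 0 < δ) {U : Set (SpaceTime n)} (hU : IsOpen U)
    (hUT : ∀ q ∈ U, q.2 < T) {v : SpaceTime n → ℂ} (hv : Good n T δ v) (h0 : EqOn v 0 U)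
    {p : SpaceTime n} (hp : p ∈ U) (s : ℝ) :
    JJ n s (heatOp n v) p = -(1 + s : ℝ) * JJ n (s + 1) v p := by
  obtain ⟨r, hr, c, hc, -, h⟩ := EE_bound (n := n) hδ hU hUT hp
  obtain ⟨C, hC0, hC⟩ := h v hv h0
  obtain ⟨K, b, hK, hb, hKb⟩ := exp_bound hc (-1 - s)
  have hbound : ∀ τ : ℝ, 0 < τ → ‖EE n v τ p * ((τ ^ (-1 - s) : ℝ) : ℂ)‖ ≤
      C * K * (τ ^ b * Real.exp (-δ * τ)) := by
    intro τ hτ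
    rw [norm_mul, Complex.norm_real, Real.norm_of_nonneg (by positivity)]
    calc _ ≤ C * (Real.exp (-c / τ) * Real.exp (-(δ * τ))) * τ ^ (-1 - s) := by
            gcongr; exact hC p (Metric.mem_ball_self hr) τ hτ
      _ = C * (Real.exp (-c / τ) * τ ^ (-1 - s)) * Real.exp (-(δ * τ)) := by ring
      _ ≤ C * (K * τ ^ b) * Real.exp (-(δ * τ)) :=
        mul_le_mul_of_nonneg_right (mul_le_mul_of_nonneg_left (hKb τ hτ) hC0) (Real.exp_pos _).le
      _ = _ := by rw [neg_mul]; ring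
  have hpt := hUT p hp
  have key := integral_Ioi_mul_deriv_eq_deriv_mul (a := (0 : ℝ)) (a' := (0 : ℂ)) (b' := 0)
    (u := fun τ => EE n v τ p) (u' := fun τ => -EE n (heatOp n v) τ p)
    (v := fun τ => ((τ ^ (-1 - s) : ℝ) : ℂ))
    (v' := fun τ => (((-1 - s) * τ ^ (-1 - (s + 1)) : ℝ) : ℂ))
    (fun τ hτ => EE_deriv_tau hδ hv p hpt hτ) ?_ ?_ ?_ ?_ ?_
  · unfold JJ
    have e1 : ∀ τ : ℝ, EE n v τ p * (((-1 - s) * τ ^ (-1 - (s + 1)) : ℝ) : ℂ) =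
        (-(1 + s : ℝ) : ℂ) * (EE n v τ p * ((τ ^ (-1 - (s + 1)) : ℝ) : ℂ)) := by
      intro τ; push_cast; ring
    have e2 : ∀ τ : ℝ, -EE n (heatOp n v) τ p * ((τ ^ (-1 - s) : ℝ) : ℂ) =
      -(EE n (heatOp n v) τ p * ((τ ^ (-1 - s) : ℝ) : ℂ)) := by
      intro τ; ring
    simp only [e1, e2] at key
    rw [integral_const_mul, integral_neg] at key
    rw [key]; ring
  · intro τ hτ
    have := (Real.hasDerivAt_rpow_const (x := τ) (p := -1 - s) (Or.inl (ne_of_gt hτ))).ofReal_comp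
    refine this.congr_deriv ?_
    congr 3; ring
  · have := (JJ_int hδ hU hUT hv h0 hp (-1 - (s + 1))).const_mul (-(1 + s : ℝ) : ℂ)
    refine this.congr (ae_of_all _ fun τ => ?_)
    simp only [Pi.mul_apply]; push_cast; ring
  · have := (JJ_int hδ hU hUT hv.heat (heat_vanish hU h0) hp (-1 - s)).neg
    refine this.congr (ae_of_all _ fun τ => ?_)
    simp
  · have h1 : Tendsto (fun τ : ℝ => C * K * (τ ^ b * Real.exp (-δ * τ))) (𝓝[>] 0) (𝓝 0) := by
      have h2 : ContinuousAt (fun τ : ℝ => C * K * (τ ^ b * Real.exp (-δ * τ))) 0 := by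
        have : ContinuousAt (fun τ : ℝ => τ ^ b) 0 :=
          Real.continuousAt_rpow_const _ _ (Or.inr (by linarith))
        exact continuousAt_const.mul (this.mul (by fun_prop))
      have h3 := h2.tendsto
      rw [Real.zero_rpow (by linarith), zero_mul, mul_zero] at h3
      exact h3.mono_left nhdsWithin_le_nhds
    refine squeeze_zero_norm' ?_ h1
    filter_upwards [self_mem_nhdsWithin] with τ hτ
    exact hbound τ hτ
  · have h1 : Tendsto (fun τ : ℝ => C * K * (τ ^ b * Real.exp (-δ * τ))) atTop (𝓝 0) := by
      simpa using (tendsto_rpow_mul_exp_neg_mul_atTop_nhds_zero b δ hδ).const_mul (C * K)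
    refine squeeze_zero_norm' ?_ h1
    filter_upwards [eventually_gt_atTop 0] with τ hτ
    exact hbound τ hτ

lemma iter_good {n : ℕ} {T δ : ℝ} {U : Set (SpaceTime n)} (hU : IsOpen U)
    {v : SpaceTime n → ℂ} (hv : Good n T δ v) (h0 : EqOn v 0 U) (l : ℕ) :
    Good n T δ ((heatOp n)^[l] v) ∧ EqOn ((heatOp n)^[l] v) 0 U := by
  induction l with
  | zero => exact ⟨hv, h0⟩
  | succ l ih =>
    rw [Function.iterate_succ_apply']
    exact ⟨ih.1.heat, heat_vanish hU ih.2⟩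

lemma JJ_heat_iter {n : ℕ} {T δ : ℝ} (hδ : 0 < δ) {U : Set (SpaceTime n)} (hU : IsOpen U)
    (hUT : ∀ q ∈ U, q.2 < T) {v : SpaceTime n → ℂ} (hv : Good n T δ v) (h0 : EqOn v 0 U)
    {p : SpaceTime n} (hp : p ∈ U) (l : ℕ) : ∀ (s : ℝ), 0 < s →
    JJ n s ((heatOp n)^[l] v) p =
      (((-1) ^ l * Real.Gamma (1 + s + l) / Real.Gamma (1 + s) : ℝ) : ℂ) * JJ n (s + l) v p := by
  induction l with
  | zero =>
    intro s hs
    have : Real.Gamma (1 + s) ≠ 0 := (Real.Gamma_pos_of_pos (by linarith)).ne'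
    simp [this]
  | succ l ih =>
    intro s hs
    rw [Function.iterate_succ_apply']
    obtain ⟨h1, h2⟩ := iter_good hU hv h0 l
    rw [JJ_heat hδ hU hUT h1 h2 hp, ih (s + 1) (by linarith), ← mul_assoc, ← Complex.ofReal_neg,
      ← Complex.ofReal_mul]
    have e1 : s + 1 + (l : ℝ) = s + ((l + 1 : ℕ) : ℝ) := by push_cast; ring
    have e2 : 1 + (s + 1) + (l : ℝ) = 1 + s + ((l + 1 : ℕ) : ℝ) := by push_cast; ring
    have e3 : Real.Gamma (1 + (s + 1)) = (1 + s) * Real.Gamma (1 + s) := by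
      rw [← Real.Gamma_add_one (by linarith)]; congr 1; ring
    have : Real.Gamma (1 + s) ≠ 0 := (Real.Gamma_pos_of_pos (by linarith)).ne'
    have hs1 : (1 + s) ≠ 0 := by linarith
    rw [e1, e2, e3]
    congr 2
    rw [pow_succ]; field_simp

/-- The relation `∑ d_k J_{s_k} v_k = 0` on `U` is stable under differentiation. -/
lemma rel_pderiv {n N : ℕ} {T δ : ℝ} (hδ : 0 < δ) {U : Set (SpaceTime n)} (hU : IsOpen U)
    (hUT : ∀ q ∈ U, q.2 < T) {v : Fin N → SpaceTime n → ℂ} (hv : ∀ k, Good n T δ (v k))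
    (h0 : ∀ k, EqOn (v k) 0 U) (d : Fin N → ℂ) (s : Fin N → ℝ)
    (hrel : ∀ p ∈ U, ∑ k, d k * JJ n (s k) (v k) p = 0) (o : Option (Fin n)) :
    ∀ p ∈ U, ∑ k, d k * JJ n (s k) (pderivDir n (dirv n o) (v k)) p = 0 := by
  intro p hp
  have h1 : HasDerivAt (fun r : ℝ => ∑ k, d k * JJ n (s k) (v k) (p + r • dirv n o))
      (∑ k, d k * JJ n (s k) (pderivDir n (dirv n o) (v k)) p) 0 :=
    HasDerivAt.fun_sum fun k _ => (JJ_deriv hδ hU hUT (hv k) (h0 k) hp (s k) o).const_mul _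
  have h2 : (fun r : ℝ => ∑ k, d k * JJ n (s k) (v k) (p + r • dirv n o)) =ᶠ[𝓝 0] fun _ => 0 := by
    have hc : Continuous (fun r : ℝ => p + r • dirv n o) := by fun_prop
    filter_upwards [hc.continuousAt.preimage_mem_nhds (hU.mem_nhds (by simpa using hp))] with r hr
    exact hrel _ hr
  exact h1.unique ((hasDerivAt_const (0:ℝ) (0:ℂ)).congr_of_eventuallyEq h2)

lemma EE_heat {n : ℕ} {T δ : ℝ} {v : SpaceTime n → ℂ} (hδ : 0 < δ) (h : Good n T δ v)
    (p : SpaceTime n) (hp : p.2 < T) {τ : ℝ} (hτ : 0 < τ) :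
    EE n (heatOp n v) τ p = EE n (pderivDir n (dirv n none) v) τ p -
        ∑ i, EE n (pderivDir n (dirv n (some i)) (pderivDir n (dirv n (some i)) v)) τ p := by
  have hi0 := hkv_int hδ (h.pderiv none) p (√τ) τ (by linarith)
  unfold EE
  rw [← integral_finsetSum, ← integral_sub hi0]
  · congr 1; funext z
    simp only [heatOp, dirv]
    rw [← Finset.mul_sum]; ring
  · exact integrable_finsetSum _ fun i _ =>
      hkv_int hδ ((h.pderiv (some i)).pderiv (some i)) p (√τ) τ (by linarith)
  · exact fun i _ => hkv_int hδ ((h.pderiv (some i)).pderiv (some i)) p (√τ) τ (by linarith)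

lemma JJ_heat_expand {n : ℕ} {T δ : ℝ} (hδ : 0 < δ) {U : Set (SpaceTime n)} (hU : IsOpen U)
    (hUT : ∀ q ∈ U, q.2 < T) {v : SpaceTime n → ℂ} (hv : Good n T δ v) (h0 : EqOn v 0 U)
    {p : SpaceTime n} (hp : p ∈ U) (s : ℝ) :
    JJ n s (heatOp n v) p = JJ n s (pderivDir n (dirv n none) v) p -
      ∑ i, JJ n s (pderivDir n (dirv n (some i)) (pderivDir n (dirv n (some i)) v)) p := by
  have hi0 := JJ_int hδ hU hUT (hv.pderiv none) (pderiv_vanish hU h0 _) hp (-1 - s)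
  have hi : ∀ i : Fin n, _ := fun i => JJ_int hδ hU hUT ((hv.pderiv (some i)).pderiv (some i))
    (pderiv_vanish hU (pderiv_vanish hU h0 _) _) hp (-1 - s)
  unfold JJ
  rw [← integral_finsetSum _ fun i _ => hi i,
    ← integral_sub hi0 (integrable_finsetSum _ fun i _ => hi i)]
  refine setIntegral_congr_fun measurableSet_Ioi fun τ hτ => ?_
  rw [EE_heat hδ hv p (hUT p hp) hτ, sub_mul, Finset.sum_mul]

lemma rel_heat {n N : ℕ} {T δ : ℝ} (hδ : 0 < δ) {U : Set (SpaceTime n)} (hU : IsOpen U)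
    (hUT : ∀ q ∈ U, q.2 < T) {v : Fin N → SpaceTime n → ℂ} (hv : ∀ k, Good n T δ (v k))
    (h0 : ∀ k, EqOn (v k) 0 U) (d : Fin N → ℂ) (s : Fin N → ℝ)
    (hrel : ∀ p ∈ U, ∑ k, d k * JJ n (s k) (v k) p = 0) :
    ∀ p ∈ U, ∑ k, d k * JJ n (s k) (heatOp n (v k)) p = 0 := by
  intro p hp
  have h1 := rel_pderiv hδ hU hUT hv h0 d s hrel none p hp
  have h2 : ∀ i : Fin n, _ := fun i => rel_pderiv hδ hU hUT (fun k => (hv k).pderiv (some i))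
    (fun k => pderiv_vanish hU (h0 k) _) d s
    (rel_pderiv hδ hU hUT hv h0 d s hrel (some i)) (some i) p hp
  have h3 : ∀ k, d k * JJ n (s k) (heatOp n (v k)) p =
      d k * JJ n (s k) (pderivDir n (dirv n none) (v k)) p -
      ∑ i, d k * JJ n (s k) (pderivDir n (dirv n (some i)) (pderivDir n (dirv n (some i)) (v k))) p := by
    intro k
    rw [JJ_heat_expand hδ hU hUT (hv k) (h0 k) hp, mul_sub, Finset.mul_sum]
  simp only [h3]
  rw [Finset.sum_sub_distrib, h1, Finset.sum_comm]
  simp [h2]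

lemma rel_heat_iter {n N : ℕ} {T δ : ℝ} (hδ : 0 < δ) {U : Set (SpaceTime n)} (hU : IsOpen U)
    (hUT : ∀ q ∈ U, q.2 < T) {v : Fin N → SpaceTime n → ℂ} (hv : ∀ k, Good n T δ (v k))
    (h0 : ∀ k, EqOn (v k) 0 U) (d : Fin N → ℂ) (s : Fin N → ℝ)
    (hrel : ∀ p ∈ U, ∑ k, d k * JJ n (s k) (v k) p = 0) (j : ℕ) :
    ∀ p ∈ U, ∑ k, d k * JJ n (s k) ((heatOp n)^[j] (v k)) p = 0 := by
  induction j with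
  | zero => exact hrel
  | succ j ih =>
    simp only [Function.iterate_succ_apply']
    exact rel_heat hδ hU hUT (fun k => (iter_good hU (hv k) (h0 k) j).1)
      (fun k => (iter_good hU (hv k) (h0 k) j).2) d s ih

end Part3

section Part4

open Filter Topology
open scoped FourierTransform

def PhiT {Ω : Type*} [MeasurableSpace Ω] (μ : Measure Ω) (g : Ω → ℂ) (X : Ω → ℝ) (z : ℂ) : ℂ :=
  ∫ ω, g ω * Complex.exp (z * X ω) ∂μ

lemma PhiT_norm (z : ℂ) (x : ℝ) : ‖Complex.exp (z * x)‖ ≤ Real.exp (|z.re| * |x|) := by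
  rw [Complex.norm_exp]
  apply Real.exp_le_exp.mpr
  have : (z * x).re = z.re * x := by simp
  rw [this, ← abs_mul]; exact le_abs_self _

lemma PhiT_int {Ω : Type*} [MeasurableSpace Ω] {μ : Measure Ω} {g : Ω → ℂ} {X : Ω → ℝ} {ε : ℝ}
    (hg : AEStronglyMeasurable g μ) (hX : AEMeasurable X μ)
    (hi : Integrable (fun ω => ‖g ω‖ * Real.exp (ε * |X ω|)) μ) {z : ℂ} (hz : |z.re| ≤ ε) :
    Integrable (fun ω => g ω * Complex.exp (z * X ω)) μ := by
  refine hi.mono' ?_ (ae_of_all _ fun ω => ?_)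
  · exact hg.mul (AEMeasurable.aestronglyMeasurable (by fun_prop))
  · rw [norm_mul]
    refine mul_le_mul_of_nonneg_left ((PhiT_norm z _).trans ?_) (norm_nonneg _)
    exact Real.exp_le_exp.mpr (mul_le_mul_of_nonneg_right hz (abs_nonneg _))

lemma PhiT_diff {Ω : Type*} [MeasurableSpace Ω] {μ : Measure Ω} {g : Ω → ℂ} {X : Ω → ℝ} {ε : ℝ}
    (hg : AEStronglyMeasurable g μ) (hX : AEMeasurable X μ)
    (hi : Integrable (fun ω => ‖g ω‖ * Real.exp (ε * |X ω|)) μ) {z₀ : ℂ} (hz : |z₀.re| < ε) :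
    DifferentiableAt ℂ (PhiT μ g X) z₀ := by
  set r := (ε - |z₀.re|) / 2 with hr
  have hr0 : 0 < r := by rw [hr]; linarith
  have hball : ∀ z ∈ Metric.ball z₀ r, |z.re| ≤ |z₀.re| + r := by
    intro z hz
    have h1 : |z.re - z₀.re| ≤ ‖z - z₀‖ := by
      rw [← Complex.sub_re]; exact Complex.abs_re_le_norm _
    have h2 : ‖z - z₀‖ < r := by rwa [← dist_eq_norm]
    have h3 := abs_sub_abs_le_abs_sub z.re z₀.re
    linarith
  have key := hasDerivAt_integral_of_dominated_loc_of_deriv_le (μ := μ) (𝕜 := ℂ)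
    (F := fun z ω => g ω * Complex.exp (z * X ω))
    (F' := fun z ω => g ω * (Complex.exp (z * X ω) * X ω)) (x₀ := z₀)
    (bound := fun ω => ‖g ω‖ * Real.exp (ε * |X ω|) * (1 / r)) (Metric.ball_mem_nhds z₀ hr0)
    ?_ (PhiT_int hg hX hi hz.le) ?_ ?_ (hi.mul_const _) ?_
  · exact key.2.differentiableAt
  · exact Eventually.of_forall fun z => hg.mul (AEMeasurable.aestronglyMeasurable (by fun_prop))
  · exact hg.mul (AEMeasurable.aestronglyMeasurable (by fun_prop))
  · refine ae_of_all _ fun ω z hz => ?_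
    rw [norm_mul, norm_mul, Complex.norm_real, Real.norm_eq_abs, mul_assoc]
    refine mul_le_mul_of_nonneg_left ?_ (norm_nonneg _)
    have h1 : |X ω| ≤ Real.exp (r * |X ω|) * (1 / r) := by
      have := Real.add_one_le_exp (r * |X ω|)
      rw [mul_one_div, le_div_iff₀ hr0]; nlinarith
    calc _ ≤ Real.exp (|z.re| * |X ω|) * (Real.exp (r * |X ω|) * (1 / r)) :=
          mul_le_mul (PhiT_norm z _) h1 (abs_nonneg _) (Real.exp_pos _).le
      _ ≤ Real.exp ((|z₀.re| + r) * |X ω|) * (Real.exp (r * |X ω|) * (1 / r)) := by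
          refine mul_le_mul_of_nonneg_right (Real.exp_le_exp.mpr ?_) (by positivity)
          exact mul_le_mul_of_nonneg_right (hball z hz) (abs_nonneg _)
      _ = _ := by
          rw [← mul_assoc, ← Real.exp_add]; congr 2; rw [hr]; ring
  · refine ae_of_all _ fun ω z hz => ?_
    refine HasDerivAt.const_mul _ ?_
    have := ((hasDerivAt_id z).mul_const (X ω : ℂ)).cexp
    simpa using this

lemma strip_open (ε : ℝ) : IsOpen {z : ℂ | |z.re| < ε} :=
  isOpen_lt (by fun_prop) continuous_const

lemma strip_preconn (ε : ℝ) : IsPreconnected {z : ℂ | |z.re| < ε} := by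
  have : {z : ℂ | |z.re| < ε} = Complex.reLm ⁻¹' (Ioo (-ε) ε) := by
    ext z; simp [abs_lt]
  rw [this]
  exact ((convex_Ioo (-ε) ε).linear_preimage Complex.reLm).isPreconnected

lemma PhiT_analytic {Ω : Type*} [MeasurableSpace Ω] {μ : Measure Ω} {g : Ω → ℂ} {X : Ω → ℝ} {ε : ℝ}
    (hg : AEStronglyMeasurable g μ) (hX : AEMeasurable X μ)
    (hi : Integrable (fun ω => ‖g ω‖ * Real.exp (ε * |X ω|)) μ) :
    AnalyticOnNhd ℂ (PhiT μ g X) {z : ℂ | |z.re| < ε} :=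
  DifferentiableOn.analyticOnNhd (fun _ hz => (PhiT_diff hg hX hi hz).differentiableWithinAt)
    (strip_open ε)

lemma PhiT_zero {Ω : Type*} [MeasurableSpace Ω] {μ : Measure Ω} {g : Ω → ℂ} {X : Ω → ℝ} {ε : ℝ}
    (hε : 0 < ε) (hg : AEStronglyMeasurable g μ) (hX : AEMeasurable X μ)
    (hi : Integrable (fun ω => ‖g ω‖ * Real.exp (ε * |X ω|)) μ)
    (hf : ∃ᶠ z in 𝓝[≠] (0 : ℂ), PhiT μ g X z = 0) (t : ℝ) :
    ∫ ω, g ω * Complex.exp (Complex.I * t * X ω) ∂μ = 0 := by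
  have h := (PhiT_analytic hg hX hi).eqOn_zero_of_preconnected_of_frequently_eq_zero
    (strip_preconn ε) (z₀ := 0) (by simpa using hε) hf
  exact h (x := Complex.I * t) (by simpa using hε)

lemma freq_of_real {f : ℂ → ℂ} {ε : ℝ} (hε : 0 < ε) (h : ∀ r : ℝ, 0 < r → r < ε → f r = 0) :
    ∃ᶠ z in 𝓝[≠] (0 : ℂ), f z = 0 := by
  have h1 : Tendsto (fun r : ℝ => (r : ℂ)) (𝓝[>] 0) (𝓝[≠] 0) := by
    refine tendsto_nhdsWithin_iff.mpr ⟨?_, ?_⟩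
    · have : Tendsto (fun r : ℝ => (r : ℂ)) (𝓝 0) (𝓝 ((0 : ℝ) : ℂ)) :=
        Complex.continuous_ofReal.tendsto 0
      simpa using this.mono_left nhdsWithin_le_nhds
    · filter_upwards [self_mem_nhdsWithin] with r hr
      simpa using ne_of_gt hr
  refine h1.frequently (Eventually.frequently ?_)
  filter_upwards [Ioo_mem_nhdsGT hε] with r hr using h r hr.1 hr.2

lemma PhiT_moments {Ω : Type*} [MeasurableSpace Ω] {μ : Measure Ω} {g : Ω → ℂ} {X : Ω → ℝ} {ε : ℝ}
    (hg : AEStronglyMeasurable g μ) (hX : AEMeasurable X μ)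
    (hi : Integrable (fun ω => ‖g ω‖ * Real.exp (ε * |X ω|)) μ)
    (hm : ∀ j : ℕ, ∫ ω, g ω * (X ω : ℂ) ^ j ∂μ = 0) {z : ℂ} (hz : ‖z‖ < ε) :
    PhiT μ g X z = 0 := by
  have hexp : ∀ x : ℝ, HasSum (fun j : ℕ => x ^ j / (j.factorial : ℝ)) (Real.exp x) := fun x => by
    rw [Real.exp_eq_exp_ℝ]; exact NormedSpace.expSeries_div_hasSum_exp x
  have hcexp : ∀ x : ℂ, HasSum (fun j : ℕ => x ^ j / (j.factorial : ℂ)) (Complex.exp x) := fun x => by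
    rw [Complex.exp_eq_exp_ℂ]; exact NormedSpace.expSeries_div_hasSum_exp x
  have h := hasSum_integral_of_dominated_convergence (μ := μ)
    (F := fun j ω => g ω * ((z * X ω) ^ j / (j.factorial : ℂ)))
    (f := fun ω => g ω * Complex.exp (z * X ω))
    (bound := fun j ω => ‖g ω‖ * ((ε * |X ω|) ^ j / (j.factorial : ℝ))) ?_ ?_ ?_ ?_ ?_
  · refine h.unique ?_
    convert hasSum_zero with j
    have : ∀ ω, g ω * ((z * X ω) ^ j / (j.factorial : ℂ)) =
        (z ^ j / (j.factorial : ℂ)) * (g ω * (X ω : ℂ) ^ j) := fun ω => by rw [mul_pow]; ring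
    simp only [this]
    rw [integral_const_mul, hm, mul_zero]
  · intro j
    exact hg.mul (AEMeasurable.aestronglyMeasurable (by fun_prop))
  · intro j
    refine ae_of_all _ fun ω => ?_
    rw [norm_mul, norm_div, norm_pow, norm_mul, Complex.norm_real, Real.norm_eq_abs,
      Complex.norm_natCast]
    refine mul_le_mul_of_nonneg_left ?_ (norm_nonneg _)
    gcongr
  · exact ae_of_all _ fun ω => (hexp _).summable.mul_left _
  · refine hi.congr (ae_of_all _ fun ω => ?_)
    exact ((hexp _).mul_left _).tsum_eq.symm
  · exact ae_of_all _ fun ω => (hcexp _).mul_left _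

lemma fourier_inj {V : Type*} [NormedAddCommGroup V] [InnerProductSpace ℝ V] [FiniteDimensional ℝ V]
    [MeasurableSpace V] [BorelSpace V] {g : V → ℂ} (hg : Integrable g)
    (h : ∀ w : V, ∫ v, g v * Complex.exp (Complex.I * (inner ℝ v w : ℝ)) = 0)
    {v : V} (hv : ContinuousAt g v) : g v = 0 := by
  have h0 : 𝓕 g = 0 := by
    funext w
    rw [Real.fourier_eq']
    have := h ((-2 * π) • w)
    rw [Pi.zero_apply, ← this]
    congr 1; funext x
    rw [smul_eq_mul, mul_comm, inner_smul_right]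
    congr 2; push_cast; ring
  have := hg.fourierInv_fourier_eq (by rw [h0]; exact integrable_zero _ _ _) hv
  rw [← this, h0]
  simp [Real.fourierInv_eq']

lemma fourier_inj_real {g : ℝ → ℂ} (hg : Integrable g)
    (h : ∀ t : ℝ, ∫ x, g x * Complex.exp (Complex.I * t * x) = 0)
    {v : ℝ} (hv : ContinuousAt g v) : g v = 0 := by
  refine fourier_inj hg (fun w => ?_) hv
  rw [← h w]
  congr 1; funext x
  simp [mul_assoc]

end Part4

section Part5

open Filter Topology

structure FB (c δ C : ℝ) (F : ℝ → ℂ) : Prop where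
  cont : ContinuousOn F (Ioi 0)
  bd : ∀ τ : ℝ, 0 < τ → ‖F τ‖ ≤ C * (Real.exp (-c / τ) * Real.exp (-(δ * τ)))

def LF (F : ℝ → ℂ) (w : ℝ) : ℂ := ∫ τ in Ioi (0 : ℝ), F τ * (Real.exp (-(w * τ)) : ℂ)

lemma FB.meas {c δ C : ℝ} {F : ℝ → ℂ} (h : FB c δ C F) :
    AEStronglyMeasurable F (volume.restrict (Ioi 0)) :=
  h.cont.aestronglyMeasurable measurableSet_Ioi

lemma exp_neg_int {δ : ℝ} (hδ : 0 < δ) :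
    IntegrableOn (fun τ : ℝ => Real.exp (-(δ * τ))) (Ioi 0) := by
  simpa using integrableOn_exp_mul_Ioi (a := -δ) (by linarith) 0

lemma FB.norm_int {c δ C : ℝ} (hc : 0 < c) (hδ : 0 < δ) {F : ℝ → ℂ} (h : FB c δ C F) (a : ℝ) :
    IntegrableOn (fun τ => ‖F τ‖ * τ ^ a) (Ioi 0) := by
  refine Integrable.mono' ((dom_int hc hδ a).const_mul C) ?_ ?_
  · refine h.meas.norm.mul (ContinuousOn.aestronglyMeasurable ?_ measurableSet_Ioi)
    intro τ hτ
    exact (Real.continuousAt_rpow_const _ _ (Or.inl (ne_of_gt hτ))).continuousWithinAt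
  · refine (ae_restrict_iff' measurableSet_Ioi).mpr (ae_of_all _ fun τ hτ => ?_)
    have hτ0 : 0 < τ := hτ
    rw [Real.norm_of_nonneg (by positivity), ← mul_assoc]
    exact mul_le_mul_of_nonneg_right (h.bd τ hτ0) (by positivity)

lemma FB.int {c δ C : ℝ} (hc : 0 < c) (hδ : 0 < δ) {F : ℝ → ℂ} (h : FB c δ C F) :
    IntegrableOn F (Ioi 0) := by
  have := h.norm_int hc hδ 0
  simp only [Real.rpow_zero, mul_one] at this
  exact (integrable_norm_iff h.meas).mp this

lemma LF_cont {c δ C : ℝ} (hc : 0 < c) (hδ : 0 < δ) {F : ℝ → ℂ} (h : FB c δ C F) :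
    Continuous (fun v : ℝ => LF F (v ^ 2)) := by
  unfold LF
  refine continuous_of_dominated (bound := fun τ => ‖F τ‖) ?_ ?_ (h.int hc hδ).norm ?_
  · intro v
    exact h.meas.mul (Continuous.aestronglyMeasurable (by fun_prop))
  · intro v
    refine (ae_restrict_iff' measurableSet_Ioi).mpr (ae_of_all _ fun τ hτ => ?_)
    have hτ0 : 0 < τ := hτ
    rw [norm_mul, Complex.norm_real, Real.norm_of_nonneg (Real.exp_pos _).le]
    refine mul_le_of_le_one_right (norm_nonneg _) (Real.exp_le_one_iff.mpr ?_)
    have : 0 ≤ v ^ 2 * τ := by positivity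
    linarith
  · refine ae_of_all _ fun τ => ?_
    fun_prop

lemma LF_bound {c δ C : ℝ} (hc : 0 < c) (hδ : 0 < δ) (hC : 0 ≤ C) {F : ℝ → ℂ} (h : FB c δ C F) :
    ∃ K, 0 ≤ K ∧ ∀ v : ℝ, ‖LF F (v ^ 2)‖ ≤ K * Real.exp (-(2 * √c * |v|)) := by
  refine ⟨C * ∫ τ in Ioi (0 : ℝ), Real.exp (-(δ * τ)), ?_, fun v => ?_⟩
  · exact mul_nonneg hC (setIntegral_nonneg measurableSet_Ioi fun _ _ => (Real.exp_pos _).le)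
  · unfold LF
    have h1 : ∀ τ : ℝ, τ ∈ Ioi (0 : ℝ) → ‖F τ * (Real.exp (-(v ^ 2 * τ)) : ℂ)‖ ≤
        C * Real.exp (-(2 * √c * |v|)) * Real.exp (-(δ * τ)) := by
      intro τ hτ
      have hτ0 : 0 < τ := hτ
      rw [norm_mul, Complex.norm_real, Real.norm_of_nonneg (Real.exp_pos _).le]
      calc _ ≤ C * (Real.exp (-c / τ) * Real.exp (-(δ * τ))) * Real.exp (-(v ^ 2 * τ)) :=
            mul_le_mul_of_nonneg_right (h.bd τ hτ0) (Real.exp_pos _).le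
        _ = C * Real.exp (-c / τ + -(v ^ 2 * τ)) * Real.exp (-(δ * τ)) := by
            rw [Real.exp_add]; ring
        _ ≤ _ := by
            refine mul_le_mul_of_nonneg_right (mul_le_mul_of_nonneg_left
              (Real.exp_le_exp.mpr ?_) hC) (Real.exp_pos _).le
            have h2 : 0 ≤ (√c - |v| * τ) ^ 2 / τ := by positivity
            have h3 : (√c - |v| * τ) ^ 2 / τ = c / τ + v ^ 2 * τ - 2 * √c * |v| := by
              have : √c ^ 2 = c := Real.sq_sqrt hc.le
              field_simp
              rw [sub_sq, this, mul_pow, sq_abs]; ring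
            rw [neg_div]; linarith
    refine (norm_integral_le_of_norm_le ((exp_neg_int hδ).const_mul
      (C * Real.exp (-(2 * √c * |v|)))) ((ae_restrict_iff' measurableSet_Ioi).mpr
        (ae_of_all _ h1))).trans (le_of_eq ?_)
    rw [integral_const_mul]; ring

lemma LF_fubini {c δ C : ℝ} (hc : 0 < c) (hδ : 0 < δ) {F : ℝ → ℂ} (h : FB c δ C F)
    {a : ℝ} (ha : 0 < a) :
    IntegrableOn (fun v : ℝ => ((v ^ a : ℝ) : ℂ) * LF F (v ^ 2)) (Ioi 0) ∧
    ∫ v in Ioi (0 : ℝ), ((v ^ a : ℝ) : ℂ) * LF F (v ^ 2) =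
      (1 / 2 * Real.Gamma ((a + 1) / 2) : ℝ) *
        ∫ τ in Ioi (0 : ℝ), F τ * ((τ ^ (-(a + 1) / 2) : ℝ) : ℂ) := by
  set f : ℝ → ℝ → ℂ := fun v τ => ((v ^ a : ℝ) : ℂ) * (F τ * (Real.exp (-(v ^ 2 * τ)) : ℂ)) with hf
  have hf' : ∀ v τ, f v τ = F τ * ((v ^ a * Real.exp (-τ * v ^ (2 : ℝ)) : ℝ) : ℂ) := by
    intro v τ
    rw [hf]; push_cast
    have : (v ^ (2 : ℝ) : ℝ) = v ^ 2 := by norm_cast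
    rw [this]
    push_cast; rw [show -((v : ℂ) ^ 2 * τ) = -τ * (v : ℂ) ^ 2 by ring]; ring
  have hmeas : AEStronglyMeasurable (Function.uncurry f)
      ((volume.restrict (Ioi (0 : ℝ))).prod (volume.restrict (Ioi (0 : ℝ)))) := by
    rw [Measure.prod_restrict]
    refine ContinuousOn.aestronglyMeasurable ?_ (measurableSet_Ioi.prod measurableSet_Ioi)
    have h1 : ContinuousOn (fun q : ℝ × ℝ => F q.2) (Ioi 0 ×ˢ Ioi 0) :=
      h.cont.comp continuousOn_snd fun q hq => hq.2
    have h2 : Continuous (fun q : ℝ × ℝ => ((q.1 ^ a : ℝ) : ℂ)) :=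
      Complex.continuous_ofReal.comp ((Real.continuous_rpow_const ha.le).comp continuous_fst)
    have h3 : Continuous (fun q : ℝ × ℝ => (Real.exp (-(q.1 ^ 2 * q.2)) : ℂ)) := by fun_prop
    exact h2.continuousOn.mul (h1.mul h3.continuousOn)
  have hInt : Integrable (Function.uncurry f)
      ((volume.restrict (Ioi (0 : ℝ))).prod (volume.restrict (Ioi (0 : ℝ)))) := by
    rw [integrable_prod_iff' hmeas]
    constructor
    · refine (ae_restrict_iff' measurableSet_Ioi).mpr (ae_of_all _ fun τ hτ => ?_)
      simp only [Function.uncurry_apply_pair, hf']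
      exact ((integrableOn_rpow_mul_exp_neg_mul_rpow (p := 2) (by linarith) two_pos
        hτ).ofReal).const_mul _
    · refine ((h.norm_int hc hδ (-(a + 1) / 2)).mul_const (1 / 2 * Real.Gamma ((a + 1) / 2))).congr ?_
      refine (ae_restrict_iff' measurableSet_Ioi).mpr (ae_of_all _ fun τ hτ => ?_)
      simp only [Function.uncurry_apply_pair, hf']
      have : ∀ v ∈ Ioi (0 : ℝ), ‖F τ * ((v ^ a * Real.exp (-τ * v ^ (2 : ℝ)) : ℝ) : ℂ)‖ =
          ‖F τ‖ * (v ^ a * Real.exp (-τ * v ^ (2 : ℝ))) := by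
        intro v hv
        have hv0 : 0 < v := hv
        rw [norm_mul, Complex.norm_real, Real.norm_of_nonneg (by positivity)]
      rw [setIntegral_congr_fun measurableSet_Ioi this, integral_const_mul,
        integral_rpow_mul_exp_neg_mul_rpow two_pos (by linarith) hτ]
      ring
  have e1 : ∀ v, ((v ^ a : ℝ) : ℂ) * LF F (v ^ 2) = ∫ τ in Ioi (0 : ℝ), f v τ := by
    intro v
    rw [hf]; simp only [LF]; rw [integral_const_mul]
  simp only [e1]
  refine ⟨hInt.integral_prod_left, ?_⟩
  rw [integral_integral_swap hInt, ← integral_const_mul]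
  refine setIntegral_congr_fun measurableSet_Ioi fun τ hτ => ?_
  simp only [hf']
  rw [integral_const_mul, integral_complex_ofReal,
    integral_rpow_mul_exp_neg_mul_rpow two_pos (by linarith) hτ]
  push_cast; ring

lemma integrable_even {f : ℝ → ℝ} (hf : IntegrableOn f (Ioi 0)) (he : ∀ x, f (-x) = f x) :
    Integrable f := by
  have int_Iic : IntegrableOn f (Iic 0) := by
    rw [← Measure.map_neg_eq_self (volume : Measure ℝ)]
    let m : MeasurableEmbedding fun x : ℝ => -x := (Homeomorph.neg ℝ).measurableEmbedding
    rw [m.integrableOn_map_iff]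
    simp_rw [Function.comp_def, he, neg_preimage, neg_Iic, neg_zero]
    exact Iff.mpr integrableOn_Ici_iff_integrableOn_Ioi hf
  rw [← integrableOn_univ, ← Iic_union_Ioi (a := (0 : ℝ))]
  exact int_Iic.union hf

lemma integral_parity {f : ℝ → ℂ} {σ : ℂ} (he : ∀ x, f (-x) = σ * f x)
    (h0 : (σ + 1) * ∫ x in Ioi (0 : ℝ), f x = 0) : ∫ x, f x = 0 := by
  by_cases hi : Integrable f
  · rw [← intervalIntegral.integral_Iic_add_Ioi (b := (0 : ℝ)) hi.integrableOn hi.integrableOn]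
    have := integral_comp_neg_Ioi (0 : ℝ) f
    rw [neg_zero] at this
    rw [← this]
    simp only [he]
    rw [integral_const_mul, ← h0]; ring
  · exact integral_undef hi

lemma laplace_rel {N : ℕ} {c δ C : ℝ} (hc : 0 < c) (hδ : 0 < δ) (hC : 0 ≤ C) {F : Fin N → ℝ → ℂ}
    (h : ∀ k, FB c δ C (F k)) (d : Fin N → ℂ) (α : Fin N → ℝ) (hα : ∀ k, 0 < α k)
    (hm : ∀ j : ℕ, ∑ k, d k * ((Real.Gamma (1 + α k + j) : ℝ) : ℂ) *
      ∫ τ in Ioi (0 : ℝ), F k τ * ((τ ^ (-1 - (α k + j)) : ℝ) : ℂ) = 0) {w : ℝ} (hw : 0 < w) :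
    ∑ k, d k * ((w ^ α k : ℝ) : ℂ) * LF (F k) w = 0 := by
  choose K hK0 hK using fun k => LF_bound hc hδ hC (h k)
  set P : ℝ → ℂ := fun v => ∑ k, d k * (((|v| ^ (2 * α k + 1) : ℝ) : ℂ) * LF (F k) (v ^ 2)) with hP
  have hPc : Continuous P := by
    refine continuous_finsetSum _ fun k _ => continuous_const.mul (Continuous.mul ?_ (LF_cont hc hδ (h k)))
    exact Complex.continuous_ofReal.comp
      ((Real.continuous_rpow_const (by have := hα k; linarith)).comp continuous_abs)
  have hsc : 0 < √c := Real.sqrt_pos.mpr hc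
  have hPb : ∀ v, ‖P v‖ * Real.exp (√c * |v|) ≤
      ∑ k, ‖d k‖ * K k * (|v| ^ (2 * α k + 1) * Real.exp (-√c * |v| ^ (1 : ℝ))) := by
    intro v
    have h1 : ‖P v‖ ≤ ∑ k, ‖d k‖ * (|v| ^ (2 * α k + 1) * (K k * Real.exp (-(2 * √c * |v|)))) := by
      refine (norm_sum_le _ _).trans (Finset.sum_le_sum fun k _ => ?_)
      rw [norm_mul, norm_mul, Complex.norm_real, Real.norm_of_nonneg (by positivity)]
      have := hK k v
      gcongr
    refine (mul_le_mul_of_nonneg_right h1 (Real.exp_pos _).le).trans (le_of_eq ?_)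
    rw [Finset.sum_mul]
    refine Finset.sum_congr rfl fun k _ => ?_
    have : Real.exp (-√c * |v| ^ (1 : ℝ)) = Real.exp (-(2 * √c * |v|)) * Real.exp (√c * |v|) := by
      rw [← Real.exp_add, Real.rpow_one]; congr 1; ring
    rw [this]; ring
  have hInt : Integrable (fun v => ‖P v‖ * Real.exp (√c * |v|)) := by
    refine Integrable.mono' (g := fun v => ∑ k, ‖d k‖ * K k *
      (|v| ^ (2 * α k + 1) * Real.exp (-√c * |v| ^ (1 : ℝ)))) ?_ ?_ ?_
    · refine integrable_finsetSum _ fun k _ => Integrable.const_mul ?_ _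
      refine integrable_even ?_ fun x => by simp only [abs_neg]
      refine IntegrableOn.congr_fun (integrableOn_rpow_mul_exp_neg_mul_rpow (p := 1)
        (s := 2 * α k + 1) (b := √c) (by have := hα k; linarith) one_pos hsc) ?_ measurableSet_Ioi
      intro x hx
      have hx0 : 0 < x := hx
      simp only [abs_of_pos hx0]
    · exact Continuous.aestronglyMeasurable (by fun_prop)
    · refine ae_of_all _ fun v => ?_
      rw [Real.norm_of_nonneg (by positivity)]; exact hPb v
  have hPint : Integrable P := by
    refine hInt.mono hPc.aestronglyMeasurable (ae_of_all _ fun v => ?_)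
    rw [Real.norm_of_nonneg (by positivity : 0 ≤ ‖P v‖ * Real.exp (√c * |v|))]
    exact le_mul_of_one_le_right (norm_nonneg _) (Real.one_le_exp (by positivity))
  have hPeven : ∀ v, P (-v) = P v := by
    intro v; simp only [hP, abs_neg, neg_sq]
  have hmom : ∀ j : ℕ, ∫ v, P v * (v : ℂ) ^ j = 0 := by
    intro j
    refine integral_parity (σ := (-1) ^ j) ?_ ?_
    · intro x; rw [hPeven]; push_cast; rw [neg_pow]; ring
    · rcases Nat.even_or_odd' j with ⟨i, rfl | rfl⟩
      · have e : ∀ v ∈ Ioi (0 : ℝ), P v * (v : ℂ) ^ (2 * i) =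
            ∑ k, d k * (((v ^ (2 * α k + 1 + 2 * i) : ℝ) : ℂ) * LF (F k) (v ^ 2)) := by
          intro v hv
          have hv0 : 0 < v := hv
          simp only [hP, abs_of_pos hv0, Finset.sum_mul]
          refine Finset.sum_congr rfl fun k _ => ?_
          have : v ^ (2 * α k + 1 + 2 * i) = v ^ (2 * α k + 1) * v ^ (2 * i) := by
            rw [Real.rpow_add hv0]; congr 1; norm_cast
          rw [this]; push_cast; ring
        have hα' : ∀ k, 0 < 2 * α k + 1 + 2 * i := fun k => by have := hα k; positivity
        rw [setIntegral_congr_fun measurableSet_Ioi e, integral_finsetSum _ fun k _ =>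
          (LF_fubini hc hδ (h k) (hα' k)).1.const_mul _]
        have e2 : ∀ k, ∫ v in Ioi (0 : ℝ), d k * (((v ^ (2 * α k + 1 + 2 * i) : ℝ) : ℂ) *
            LF (F k) (v ^ 2)) = 1 / 2 * (d k * ((Real.Gamma (1 + α k + i) : ℝ) : ℂ) *
              ∫ τ in Ioi (0 : ℝ), F k τ * ((τ ^ (-1 - (α k + i)) : ℝ) : ℂ)) := by
          intro k
          rw [integral_const_mul, (LF_fubini hc hδ (h k) (hα' k)).2,
            show (2 * α k + 1 + 2 * i + 1) / 2 = 1 + α k + i by ring,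
            show -(2 * α k + 1 + 2 * i + 1) / 2 = -1 - (α k + i) by ring]
          push_cast; ring
        simp only [e2]
        rw [← Finset.mul_sum, hm i]; simp
      · simp [pow_succ, pow_mul]
  have hz : ∀ t : ℝ, ∫ v, P v * Complex.exp (Complex.I * t * v) = 0 := by
    intro t
    refine PhiT_zero (X := fun v => v) hsc hPc.aestronglyMeasurable (by fun_prop) hInt ?_ t
    refine freq_of_real hsc fun r hr hr' => ?_
    refine PhiT_moments (X := fun v => v) hPc.aestronglyMeasurable (by fun_prop) hInt hmom ?_
    rwa [Complex.norm_real, Real.norm_of_nonneg hr.le]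
  have hv := fourier_inj_real hPint hz (v := √w) hPc.continuousAt
  have hsw : 0 < √w := Real.sqrt_pos.mpr hw
  simp only [hP, abs_of_pos hsw, Real.sq_sqrt hw.le] at hv
  have e3 : ∀ k, √w ^ (2 * α k + 1) = √w * w ^ α k := by
    intro k
    rw [Real.rpow_add hsw, Real.rpow_mul hsw.le, Real.rpow_one]
    norm_cast
    rw [Real.sq_sqrt hw.le, mul_comm]
  have e4 : (√w : ℂ) * ∑ k, d k * ((w ^ α k : ℝ) : ℂ) * LF (F k) w = 0 := by
    rw [← hv, Finset.mul_sum]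
    refine Finset.sum_congr rfl fun k _ => ?_
    rw [e3]; push_cast; ring
  exact (mul_eq_zero.mp e4).resolve_left (by exact_mod_cast hsw.ne')

end Part5

section Part6

open Filter Topology

lemma order_arg {N : ℕ} {g : Fin N → ℂ → ℂ} (hg : ∀ k, AnalyticAt ℂ (g k) 0) {d : Fin N → ℂ}
    (hd : ∀ k, d k ≠ 0) {α : Fin N → ℝ}
    (hα : ∀ j k : Fin N, j ≠ k → ∀ m : ℤ, α k - α j ≠ m)
    (hrel : ∀ w : ℝ, 0 < w → ∑ k, d k * ((w ^ α k : ℝ) : ℂ) * g k w = 0) (k : Fin N) :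
    ∀ᶠ z in 𝓝 (0 : ℂ), g k z = 0 := by
  classical
  by_contra hk
  have hex : ∀ k, ∃ (n : ℕ) (q : ℂ → ℂ), (¬ ∀ᶠ z in 𝓝 (0 : ℂ), g k z = 0) →
      AnalyticAt ℂ q 0 ∧ q 0 ≠ 0 ∧ ∀ᶠ z in 𝓝 (0 : ℂ), g k z = (z - 0) ^ n • q z := by
    intro k
    by_cases h : ∀ᶠ z in 𝓝 (0 : ℂ), g k z = 0
    · exact ⟨0, 0, fun h' => absurd h h'⟩
    · obtain ⟨n, q, h1⟩ := (hg k).exists_eventuallyEq_pow_smul_nonzero_iff.mpr h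
      exact ⟨n, q, fun _ => h1⟩
  choose ν q hq using hex
  set S : Finset (Fin N) := Finset.univ.filter fun k => ¬ ∀ᶠ z in 𝓝 (0 : ℂ), g k z = 0 with hS
  have hmem : ∀ k, k ∈ S ↔ ¬ ∀ᶠ z in 𝓝 (0 : ℂ), g k z = 0 := by intro k; simp [hS]
  obtain ⟨k₀, hk₀, hmin⟩ := Finset.exists_min_image S (fun k => α k + ν k) ⟨k, (hmem k).mpr hk⟩
  have hof : Tendsto (fun r : ℝ => (r : ℂ)) (𝓝[>] 0) (𝓝 0) := by
    have : Tendsto (fun r : ℝ => (r : ℂ)) (𝓝 0) (𝓝 ((0 : ℝ) : ℂ)) :=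
      Complex.continuous_ofReal.tendsto 0
    simpa using this.mono_left nhdsWithin_le_nhds
  have hlt : ∀ k ∈ S, k ≠ k₀ → 0 < (α k + ν k) - (α k₀ + ν k₀) := by
    intro k hk hne
    refine sub_pos.mpr (lt_of_le_of_ne (hmin k hk) fun h => ?_)
    refine hα k₀ k hne.symm ((ν k₀ : ℤ) - ν k) ?_
    push_cast; linarith
  have hev : ∀ᶠ w : ℝ in 𝓝[>] 0,
      ∑ k ∈ S, d k * (((w ^ ((α k + ν k) - (α k₀ + ν k₀)) : ℝ) : ℂ) * q k w) = 0 := by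
    have h1 : ∀ᶠ w : ℝ in 𝓝[>] 0, ∀ k, (k ∈ S → g k w = ((w : ℂ) - 0) ^ ν k • q k w) ∧
        (k ∉ S → g k w = 0) := by
      refine eventually_all.mpr fun k => ?_
      by_cases hk : k ∈ S
      · filter_upwards [hof.eventually (hq k ((hmem k).mp hk)).2.2] with w hw
        exact ⟨fun _ => hw, fun h => absurd hk h⟩
      · have := not_not.mp (mt (hmem k).mpr hk)
        filter_upwards [hof.eventually this] with w hw
        exact ⟨fun h => absurd h hk, fun _ => hw⟩
    filter_upwards [h1, self_mem_nhdsWithin] with w hw hw0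
    have hw0' : 0 < w := hw0
    have h2 := hrel w hw0'
    rw [← Finset.sum_subset (Finset.subset_univ S) (fun k _ hk => by rw [(hw k).2 hk, mul_zero])] at h2
    have h3 : ((w ^ (α k₀ + ν k₀) : ℝ) : ℂ) * ∑ k ∈ S, d k *
        (((w ^ ((α k + ν k) - (α k₀ + ν k₀)) : ℝ) : ℂ) * q k w) = 0 := by
      rw [← h2, Finset.mul_sum]
      refine Finset.sum_congr rfl fun k hk => ?_
      rw [(hw k).1 hk, sub_zero, smul_eq_mul]
      have : w ^ (α k₀ + ν k₀) * w ^ ((α k + ν k) - (α k₀ + ν k₀)) = w ^ α k * w ^ ν k := by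
        rw [← Real.rpow_add hw0', ← Real.rpow_natCast, ← Real.rpow_add hw0']; congr 1; ring
      calc _ = d k * ((w ^ (α k₀ + ν k₀) * w ^ ((α k + ν k) - (α k₀ + ν k₀)) : ℝ) : ℂ) * q k w := by
            push_cast; ring
        _ = _ := by rw [this]; push_cast; ring
    refine (mul_eq_zero.mp h3).resolve_left ?_
    exact_mod_cast (Real.rpow_pos_of_pos hw0' _).ne'
  have hlim : Tendsto (fun w : ℝ => ∑ k ∈ S, d k *
      (((w ^ ((α k + ν k) - (α k₀ + ν k₀)) : ℝ) : ℂ) * q k w)) (𝓝[>] 0)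
      (𝓝 (∑ k ∈ S, if k = k₀ then d k * (1 * q k 0) else d k * (0 * q k 0))) := by
    refine tendsto_finsetSum _ fun k hk => ?_
    have hqk : Tendsto (fun w : ℝ => q k w) (𝓝[>] 0) (𝓝 (q k 0)) :=
      (hq k ((hmem k).mp hk)).1.continuousAt.tendsto.comp hof
    split_ifs with h
    · subst h
      simp only [sub_self, Real.rpow_zero, Complex.ofReal_one]
      exact (hqk.const_mul 1).const_mul _
    · refine Tendsto.const_mul _ (Tendsto.mul ?_ hqk)
      have h4 := (Real.continuousAt_rpow_const 0 _ (Or.inr (hlt k hk h).le)).tendsto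
      rw [Real.zero_rpow (hlt k hk h).ne'] at h4
      have h5 := (Complex.continuous_ofReal.tendsto 0).comp h4
      rw [Complex.ofReal_zero] at h5
      exact h5.mono_left nhdsWithin_le_nhds
  have hz := tendsto_nhds_unique (hlim.congr' hev) tendsto_const_nhds
  simp only [zero_mul, mul_zero, one_mul, Finset.sum_ite_eq', hk₀, if_true] at hz
  exact mul_ne_zero (hd k₀) (hq k₀ ((hmem k₀).mp hk₀)).2.1 hz

lemma laplace_zero {N : ℕ} {c δ C : ℝ} (hc : 0 < c) (hδ : 0 < δ) (hC : 0 ≤ C) {F : Fin N → ℝ → ℂ}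
    (h : ∀ k, FB c δ C (F k)) (d : Fin N → ℂ) (hd : ∀ k, d k ≠ 0) (α : Fin N → ℝ)
    (hα0 : ∀ k, 0 < α k)
    (hα : ∀ j k : Fin N, j ≠ k → ∀ m : ℤ, α k - α j ≠ m)
    (hm : ∀ j : ℕ, ∑ k, d k * ((Real.Gamma (1 + α k + j) : ℝ) : ℂ) *
      ∫ τ in Ioi (0 : ℝ), F k τ * ((τ ^ (-1 - (α k + j)) : ℝ) : ℂ) = 0)
    (k : Fin N) {τ : ℝ} (hτ : 0 < τ) : F k τ = 0 := by
  have hInt : ∀ k, Integrable (fun τ => ‖F k τ‖ * Real.exp (δ / 2 * |-τ|))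
      (volume.restrict (Ioi 0)) := by
    intro k
    refine Integrable.mono' ((exp_neg_int (half_pos hδ)).const_mul C) ?_ ?_
    · exact (h k).meas.norm.mul (Continuous.aestronglyMeasurable (by fun_prop))
    · refine (ae_restrict_iff' measurableSet_Ioi).mpr (ae_of_all _ fun τ hτ => ?_)
      have hτ0 : 0 < τ := hτ
      rw [Real.norm_of_nonneg (by positivity), abs_neg, abs_of_pos hτ0]
      have h1 : Real.exp (-c / τ) ≤ 1 := Real.exp_le_one_iff.mpr (by
        rw [neg_div]; have := div_pos hc hτ0; linarith)
      calc _ ≤ C * (Real.exp (-c / τ) * Real.exp (-(δ * τ))) * Real.exp (δ / 2 * τ) :=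
            mul_le_mul_of_nonneg_right ((h k).bd τ hτ0) (Real.exp_pos _).le
        _ ≤ C * (1 * Real.exp (-(δ * τ))) * Real.exp (δ / 2 * τ) := by gcongr
        _ = _ := by rw [one_mul, mul_assoc, ← Real.exp_add]; congr 2; ring
  set g : Fin N → ℂ → ℂ := fun k => PhiT (volume.restrict (Ioi 0)) (F k) (fun τ => -τ) with hg
  have hLF : ∀ k (w : ℝ), g k w = LF (F k) w := by
    intro k w
    simp only [hg, PhiT, LF]
    congr 1; funext τ; push_cast; congr 2; ring
  have han : ∀ k, AnalyticAt ℂ (g k) 0 := fun k =>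
    PhiT_analytic (ε := δ / 2) (h k).meas (by fun_prop) (hInt k) 0 (by simpa using hδ)
  have hz := order_arg han hd hα (fun w hw => by
    simp only [hLF]; exact laplace_rel hc hδ hC h d α hα0 hm hw) k
  have hfr : ∃ᶠ z in 𝓝[≠] (0 : ℂ), g k z = 0 :=
    (hz.filter_mono nhdsWithin_le_nhds).frequently
  have h0 := PhiT_zero (half_pos hδ) (h k).meas (by fun_prop) (hInt k) hfr
  set G : ℝ → ℂ := (Ioi (0 : ℝ)).indicator (F k) with hG
  have hGc : ContinuousAt G τ := by
    have : F k =ᶠ[𝓝 τ] G := by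
      filter_upwards [Ioi_mem_nhds hτ] with x hx
      rw [hG, indicator_of_mem hx]
    exact ((h k).cont.continuousAt (Ioi_mem_nhds hτ)).congr this
  have hGi : Integrable G := ((h k).int hc hδ).integrable_indicator measurableSet_Ioi
  have := fourier_inj_real hGi (fun t => ?_) hGc
  · rwa [hG, indicator_of_mem (show τ ∈ Ioi (0 : ℝ) from hτ)] at this
  · have h1 := h0 (-t)
    rw [← integral_indicator measurableSet_Ioi] at h1
    rw [← h1]; congr 1; funext x
    by_cases hx : x ∈ Ioi (0 : ℝ)
    · rw [hG, indicator_of_mem hx, indicator_of_mem hx]; push_cast; congr 2; ring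
    · rw [hG, indicator_of_notMem hx, indicator_of_notMem hx, zero_mul]

end Part6

section Part7

open Filter Topology

lemma gauss_unique {n : ℕ} {f : (Fin n → ℝ) → ℂ} (hf : Continuous f) {M : ℝ} (hM : ∀ y, ‖f y‖ ≤ M)
    {τ : ℝ} (hτ : 0 < τ) {O : Set (Fin n → ℝ)} (hO : IsOpen O) {x₀ : Fin n → ℝ} (hx₀ : x₀ ∈ O)
    (h : ∀ x ∈ O, ∫ y, (heatKernel n τ (x - y) : ℂ) * f y = 0) (y₀ : Fin n → ℝ) : f y₀ = 0 := by
  set g : (Fin n → ℝ) → ℂ := fun y => (Real.exp (-(sqNorm (x₀ - y)) / (4 * τ)) : ℂ) * f y with hg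
  have hgc : Continuous g := by
    have : Continuous fun y : Fin n → ℝ => sqNorm (x₀ - y) := sqNorm_continuous.comp (by fun_prop)
    exact (Complex.continuous_ofReal.comp (Real.continuous_exp.comp (this.neg.div_const _))).mul hf
  have hM0 : 0 ≤ M := (norm_nonneg _).trans (hM x₀)
  have key : ∀ θ : Fin n → ℝ, Integrable (fun y => ‖g y‖ * Real.exp (1 *
        |-(∑ i, θ i * (x₀ i - y i)) / (2 * τ)|)) ∧
      ∫ y, g y * Complex.exp (Complex.I * (1 : ℝ) * (-(∑ i, θ i * (x₀ i - y i)) / (2 * τ) : ℝ)) = 0 := by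
    intro θ
    set X : (Fin n → ℝ) → ℝ := fun y => -(∑ i, θ i * (x₀ i - y i)) / (2 * τ) with hX
    have hXc : Continuous X := by rw [hX]; fun_prop
    set A : ℝ := (∑ i, |θ i|) / (2 * τ) with hA
    have hA0 : 0 ≤ A := div_nonneg (Finset.sum_nonneg fun i _ => abs_nonneg _) (by positivity)
    have hXb : ∀ y, |X y| ≤ A * ‖x₀ - y‖ := by
      intro y
      rw [hX, hA]; simp only
      rw [abs_div, abs_neg, abs_of_pos (by positivity : 0 < 2 * τ), div_mul_eq_mul_div]
      refine div_le_div_of_nonneg_right ?_ (by positivity)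
      rw [Finset.sum_mul]
      refine (Finset.abs_sum_le_sum_abs _ _).trans (Finset.sum_le_sum fun i _ => ?_)
      rw [abs_mul]
      refine mul_le_mul_of_nonneg_left ?_ (abs_nonneg _)
      exact norm_le_pi_norm (x₀ - y) i
    have hInt : Integrable (fun y => ‖g y‖ * Real.exp (1 * |X y|)) := by
      have h1 := ((gauss_int (n := n) (b := 1 / (8 * τ)) (by positivity)).comp_sub_left x₀).const_mul
        (M * Real.exp (2 * τ * A ^ 2))
      refine h1.mono' (Continuous.aestronglyMeasurable (by fun_prop)) (ae_of_all _ fun y => ?_)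
      rw [Real.norm_of_nonneg (by positivity), hg, norm_mul, Complex.norm_real,
        Real.norm_of_nonneg (Real.exp_pos _).le, one_mul]
      have h2 : -(sqNorm (x₀ - y)) / (4 * τ) + |X y| ≤
          2 * τ * A ^ 2 + -(1 / (8 * τ)) * sqNorm (x₀ - y) := by
        have h3 := hXb y
        have h4 := norm_sq_le_sqNorm (x₀ - y)
        have h5 : A * ‖x₀ - y‖ ≤ 2 * τ * A ^ 2 + ‖x₀ - y‖ ^ 2 / (8 * τ) := by
          have : 0 ≤ (4 * τ * A - ‖x₀ - y‖) ^ 2 / (8 * τ) := by positivity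
          have e : (4 * τ * A - ‖x₀ - y‖) ^ 2 / (8 * τ) =
              2 * τ * A ^ 2 + ‖x₀ - y‖ ^ 2 / (8 * τ) - A * ‖x₀ - y‖ := by
            field_simp; ring
          linarith
        have h6 : ‖x₀ - y‖ ^ 2 / (8 * τ) ≤ sqNorm (x₀ - y) / (8 * τ) :=
          div_le_div_of_nonneg_right h4 (by positivity)
        have h7 : -(sqNorm (x₀ - y)) / (4 * τ) + sqNorm (x₀ - y) / (8 * τ) =
            -(1 / (8 * τ)) * sqNorm (x₀ - y) := by field_simp; ring
        linarith
      calc _ = ‖f y‖ * Real.exp (-(sqNorm (x₀ - y)) / (4 * τ) + |X y|) := by rw [Real.exp_add]; ring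
        _ ≤ M * Real.exp (2 * τ * A ^ 2 + -(1 / (8 * τ)) * sqNorm (x₀ - y)) :=
            mul_le_mul (hM y) (Real.exp_le_exp.mpr h2) (Real.exp_pos _).le hM0
        _ = _ := by rw [Real.exp_add]; ring
    refine ⟨hInt, ?_⟩
    refine PhiT_zero (X := X) one_pos hgc.aestronglyMeasurable hXc.aemeasurable hInt ?_ 1
    have hpre : ∃ ε > 0, ∀ r : ℝ, 0 < r → r < ε → x₀ + r • θ ∈ O := by
      have hc : Continuous fun r : ℝ => x₀ + r • θ := by fun_prop
      obtain ⟨ε, hε, hb⟩ := Metric.isOpen_iff.mp (hO.preimage hc) 0 (by simpa using hx₀)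
      refine ⟨ε, hε, fun r hr hr' => hb ?_⟩
      rw [Metric.mem_ball, dist_zero_right, Real.norm_of_nonneg hr.le]; exact hr'
    obtain ⟨ε, hε, hin⟩ := hpre
    refine freq_of_real hε fun r hr hr' => ?_
    have h0 := h _ (hin r hr hr')
    set Kc : ℝ := (4 * π * τ) ^ (-(n : ℝ) / 2) * Real.exp (-(r ^ 2 * sqNorm θ) / (4 * τ)) with hKc
    have hKpos : 0 < Kc := by positivity
    have e : ∀ y, (heatKernel n τ (x₀ + r • θ - y) : ℂ) * f y =
        (Kc : ℂ) * (g y * Complex.exp ((r : ℂ) * (X y : ℂ))) := by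
      intro y
      have e1 : heatKernel n τ (x₀ + r • θ - y) =
          Kc * (Real.exp (-(sqNorm (x₀ - y)) / (4 * τ)) * Real.exp (r * X y)) := by
        rw [hKc, heatKernel, mul_assoc (_ ^ (-(n : ℝ) / 2)), ← Real.exp_add, ← Real.exp_add]
        congr 2
        have e2 : sqNorm (x₀ + r • θ - y) = sqNorm (x₀ - y) + 2 * r * (∑ i, θ i * (x₀ i - y i)) +
            r ^ 2 * sqNorm θ := by
          simp only [sqNorm, Finset.mul_sum, ← Finset.sum_add_distrib]
          refine Finset.sum_congr rfl fun i _ => ?_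
          simp only [Pi.add_apply, Pi.sub_apply, Pi.smul_apply, smul_eq_mul]; ring
        rw [e2, hX]; field_simp; ring
      rw [e1, hg]; push_cast; ring
    simp only [e] at h0
    rw [integral_const_mul] at h0
    exact (mul_eq_zero.mp h0).resolve_left (by exact_mod_cast hKpos.ne')
  have hgi : Integrable g := by
    have := (key 0).1
    simp only [Pi.zero_apply, zero_mul, Finset.sum_const_zero, neg_zero, zero_div, abs_zero,
      mul_zero, Real.exp_zero, mul_one] at this
    exact (integrable_norm_iff hgc.aestronglyMeasurable).mp this
  have hξ : ∀ ξ : Fin n → ℝ, ∫ y, g y * Complex.exp (Complex.I * (∑ i, ξ i * y i : ℝ)) = 0 := by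
    intro ξ
    have h1 := (key ((2 * τ) • ξ)).2
    have e : ∀ y, g y * Complex.exp (Complex.I * (1 : ℝ) *
        (-(∑ i, ((2 * τ) • ξ) i * (x₀ i - y i)) / (2 * τ) : ℝ)) =
        Complex.exp (-Complex.I * (∑ i, ξ i * x₀ i : ℝ)) *
          (g y * Complex.exp (Complex.I * (∑ i, ξ i * y i : ℝ))) := by
      intro y
      have e1 : (-(∑ i, ((2 * τ) • ξ) i * (x₀ i - y i)) / (2 * τ) : ℝ) =
          -(∑ i, ξ i * x₀ i) + ∑ i, ξ i * y i := by
        have : ∑ i, ((2 * τ) • ξ) i * (x₀ i - y i) =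
            (2 * τ) * (∑ i, ξ i * x₀ i - ∑ i, ξ i * y i) := by
          rw [← Finset.sum_sub_distrib, Finset.mul_sum]
          refine Finset.sum_congr rfl fun i _ => ?_
          simp only [Pi.smul_apply, smul_eq_mul]; ring
        rw [this]; field_simp; ring
      rw [e1, mul_left_comm, ← Complex.exp_add]
      congr 2; push_cast; ring
    simp only [e] at h1
    rw [integral_const_mul] at h1
    exact (mul_eq_zero.mp h1).resolve_left (Complex.exp_ne_zero _)
  have hmp := PiLp.volume_preserving_ofLp (Fin n)
  have hemb : MeasurableEmbedding (@WithLp.ofLp 2 (Fin n → ℝ)) :=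
    (MeasurableEquiv.toLp 2 (Fin n → ℝ)).symm.measurableEmbedding
  have hfin := fourier_inj (V := EuclideanSpace ℝ (Fin n)) (g := fun v => g v.ofLp)
    (hmp.integrable_comp_of_integrable hgi) (fun w => ?_) (v := WithLp.toLp 2 y₀)
    (Continuous.continuousAt (hgc.comp (PiLp.continuous_ofLp 2 _)))
  · simp only [hg] at hfin
    refine (mul_eq_zero.mp hfin).resolve_left ?_
    exact_mod_cast (Real.exp_pos _).ne'
  · rw [← hξ w.ofLp, ← hmp.integral_comp hemb]
    congr 1

lemma frac_rel {n : ℕ} {s : ℝ} {v : SpaceTime n → ℂ} {p : SpaceTime n} (h0 : v p = 0) :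
    fracHeat n s v p = (1 / (Real.Gamma (-s) : ℂ)) * JJ n s v p := by
  unfold fracHeat JJ
  congr 1
  refine setIntegral_congr_fun measurableSet_Ioi fun τ hτ => ?_
  rw [heatSemigroup_eq n v hτ, h0, sub_zero]

lemma moments_rel {n N : ℕ} {T δ : ℝ} (hδ : 0 < δ) {U : Set (SpaceTime n)} (hU : IsOpen U)
    (hUT : ∀ q ∈ U, q.2 < T) {u : Fin N → SpaceTime n → ℂ} (hu : ∀ k, Good n T δ (u k))
    (h0 : ∀ k, EqOn (u k) 0 U) {α : Fin N → ℝ} (hpos : ∀ k, 0 < α k)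
    (hnotnat : ∀ k, ∀ m : ℕ, α k ≠ m) {b : Fin N → ℂ} (hb : ∀ k, b k ≠ 0)
    (hsum : ∀ p ∈ U, ∑ k, b k * fracHeatPoly n (α k) (u k) p = 0) :
    ∃ d : Fin N → ℂ, (∀ k, d k ≠ 0) ∧ ∀ p ∈ U, ∀ j : ℕ,
      ∑ k, d k * ((Real.Gamma (1 + α k + j) : ℝ) : ℂ) *
        ∫ τ in Ioi (0 : ℝ), EE n (u k) τ p * ((τ ^ (-1 - (α k + j)) : ℝ) : ℂ) = 0 := by
  set m : Fin N → ℕ := fun k => ⌊α k⌋.toNat with hm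
  set s : Fin N → ℝ := fun k => α k - ⌊α k⌋ with hs
  have hfl : ∀ k, (0 : ℤ) ≤ ⌊α k⌋ := fun k => Int.floor_nonneg.mpr (hpos k).le
  have hmc : ∀ k, ((m k : ℕ) : ℝ) = (⌊α k⌋ : ℝ) := by
    intro k
    have : ((m k : ℕ) : ℤ) = ⌊α k⌋ := Int.toNat_of_nonneg (hfl k)
    exact_mod_cast congrArg (Int.cast : ℤ → ℝ) this
  have hsm : ∀ k, s k + m k = α k := by intro k; rw [hmc, hs]; ring
  have hs0 : ∀ k, 0 < s k := by
    intro k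
    refine lt_of_le_of_ne (by simp [hs]) fun h => ?_
    refine hnotnat k (m k) ?_
    have := hsm k
    rw [← h] at this; linarith
  have hs1 : ∀ k, s k < 1 := by
    intro k
    have := Int.lt_floor_add_one (α k)
    simp only [hs]; linarith
  have hG : ∀ k, Real.Gamma (-s k) ≠ 0 := by
    intro k
    refine Real.Gamma_ne_zero fun l hl => ?_
    have h1 := hs0 k
    have h2 := hs1 k
    have h3 : s k = l := by linarith
    rw [h3] at h1 h2
    have h1' : 0 < l := by exact_mod_cast h1
    have h2' : l < 1 := by exact_mod_cast h2
    omega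
  have hG1 : ∀ k, Real.Gamma (1 + s k) ≠ 0 := fun k =>
    (Real.Gamma_pos_of_pos (by have := hs0 k; linarith)).ne'
  have hG' : ∀ k, (Real.Gamma (-s k) : ℂ) ≠ 0 := fun k => by exact_mod_cast hG k
  have hG1' : ∀ k, (Real.Gamma (1 + s k) : ℂ) ≠ 0 := fun k => by exact_mod_cast hG1 k
  have hrel := rel_heat_iter (v := fun k => (heatOp n)^[m k] (u k)) hδ hU hUT
    (fun k => (iter_good hU (hu k) (h0 k) _).1) (fun k => (iter_good hU (hu k) (h0 k) _).2)
    (fun k => b k * (1 / (Real.Gamma (-s k) : ℂ))) s (by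
      intro p hp
      rw [← hsum p hp]
      refine Finset.sum_congr rfl fun k _ => ?_
      rw [fracHeatPoly, frac_rel ((iter_good hU (hu k) (h0 k) _).2 hp)]
      ring)
  refine ⟨fun k => b k * (1 / (Real.Gamma (-s k) : ℂ)) * (-1) ^ m k / (Real.Gamma (1 + s k) : ℂ),
    fun k => ?_, fun p hp j => ?_⟩
  · exact div_ne_zero (mul_ne_zero (mul_ne_zero (hb k) (one_div_ne_zero (hG' k)))
      (pow_ne_zero _ (by norm_num))) (hG1' k)
  · have h1 := hrel j p hp
    have h2 : (-1 : ℂ) ^ j * ∑ k, b k * (1 / (Real.Gamma (-s k) : ℂ)) * (-1) ^ m k /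
        (Real.Gamma (1 + s k) : ℂ) * ((Real.Gamma (1 + α k + j) : ℝ) : ℂ) *
        ∫ τ in Ioi (0 : ℝ), EE n (u k) τ p * ((τ ^ (-1 - (α k + j)) : ℝ) : ℂ) = 0 := by
      rw [← h1, Finset.mul_sum]
      refine Finset.sum_congr rfl fun k _ => ?_
      rw [← Function.iterate_add_apply, JJ_heat_iter hδ hU hUT (hu k) (h0 k) hp _ _ (hs0 k)]
      have e1 : 1 + s k + ((j + m k : ℕ) : ℝ) = 1 + α k + j := by
        push_cast; rw [← hsm k]; ring
      have e2 : s k + ((j + m k : ℕ) : ℝ) = α k + j := by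
        push_cast; rw [← hsm k]; ring
      rw [e1, e2, JJ, pow_add]
      push_cast
      ring
    exact (mul_eq_zero.mp h2).resolve_left (pow_ne_zero _ (by norm_num))

lemma main_aux (n : ℕ)
    (𝒪 : Set (Fin n → ℝ)) (h𝒪open : IsOpen 𝒪) (h𝒪ne : 𝒪.Nonempty)
    (N : ℕ) (T : ℝ)
    (α : Fin N → ℝ) (hpos : ∀ k, 0 < α k)
    (hnotnat : ∀ k, ∀ m : ℕ, α k ≠ m)
    (hnonres : ∀ j k : Fin N, j ≠ k → ∀ m : ℤ, α k - α j ≠ m)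
    (b : Fin N → ℂ) (hb : ∀ k, b k ≠ 0)
    (u : Fin N → SpaceTime n → ℂ)
    (δ : ℝ) (hδ : 0 < δ) (hu : ∀ k, Good n T δ (u k))
    (hvanish : ∀ k, ∀ x ∈ 𝒪, ∀ t ∈ Ioo (-T) T, u k (x, t) = 0)
    (hsum : ∀ x ∈ 𝒪, ∀ t ∈ Ioo (-T) T,
      ∑ k, b k * fracHeatPoly n (α k) (u k) (x, t) = 0) :
    ∀ k, ∀ x : Fin n → ℝ, ∀ t ∈ Ioo (-T) T, u k (x, t) = 0 := by
  set U : Set (SpaceTime n) := 𝒪 ×ˢ Ioo (-T) T with hUdef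
  have hU : IsOpen U := h𝒪open.prod isOpen_Ioo
  have hUT : ∀ q ∈ U, q.2 < T := fun q hq => hq.2.2
  have h0 : ∀ k, EqOn (u k) 0 U := fun k q hq => hvanish k q.1 hq.1 q.2 hq.2
  obtain ⟨d, hd, hm⟩ := moments_rel hδ hU hUT hu h0 hpos hnotnat hb
    (fun p hp => hsum p.1 hp.1 p.2 hp.2)
  have hEE : ∀ k, ∀ p ∈ U, ∀ τ : ℝ, 0 < τ → EE n (u k) τ p = 0 := by
    intro k p hp τ hτ
    obtain ⟨r, hr, c, hc, -, h⟩ := EE_bound (n := n) hδ hU hUT hp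
    choose C hC0 hC using fun k => h (u k) (hu k) (h0 k)
    refine laplace_zero (F := fun k τ => EE n (u k) τ p) (C := ∑ k, C k) hc hδ
      (Finset.sum_nonneg fun k _ => hC0 k) (fun k => ⟨EE_cont hδ (hu k) p (hUT p hp), ?_⟩)
      d hd α hpos hnonres (hm p hp) k hτ
    intro τ hτ
    refine (hC k p (Metric.mem_ball_self hr) τ hτ).trans
      (mul_le_mul_of_nonneg_right ?_ (by positivity))
    exact Finset.single_le_sum (f := C) (fun k _ => hC0 k) (Finset.mem_univ k)
  intro k x t ht
  obtain ⟨x₀, hx₀⟩ := h𝒪ne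
  set t1 := (t + T) / 2 with ht1
  have ha : t < t1 := by rw [ht1]; linarith [ht.2]
  have hb1 : t1 < T := by rw [ht1]; linarith [ht.2]
  have hτ : 0 < t1 - t := by linarith
  obtain ⟨M, hM0, hM⟩ := (hu k).bd1 hδ ht.2
  refine gauss_unique (f := fun y => u k (y, t)) ?_ (fun y => hM (y, t) le_rfl) hτ h𝒪open hx₀ ?_ x
  · refine (hu k).smooth.continuousOn.comp_continuous (by fun_prop) fun y => ?_
    exact ht.2
  · intro x hx
    have hp : ((x, t1) : SpaceTime n) ∈ U := ⟨hx, by linarith [ht.1], hb1⟩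
    have := hEE k _ hp _ hτ
    rw [← heatSemigroup_eq n _ hτ, heatSemigroup] at this
    simpa using this

end Part7

/-!
Theorem 1.2 of the paper (entanglement principle), in the Euclidean case `g = I`,
with the nonresonance condition of Assumption 1.1.
-/

theorem entanglement_principle
    (n : ℕ) (hn : 2 ≤ n)
    (𝒪 : Set (Fin n → ℝ)) (h𝒪open : IsOpen 𝒪) (h𝒪ne : 𝒪.Nonempty)
    (N : ℕ) (hN : 1 ≤ N) (T : ℝ) (hT : 0 < T)
    (α : Fin N → ℝ) (hpos : ∀ k, 0 < α k) (hmono : StrictMono α)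
    (hnotnat : ∀ k, ∀ m : ℕ, α k ≠ m)
    (hnonres : ∀ j k : Fin N, j ≠ k → ∀ m : ℤ, α k - α j ≠ m)
    (b : Fin N → ℂ) (hb : ∀ k, b k ≠ 0)
    (u : Fin N → SpaceTime n → ℂ)
    (hreg : ∀ k, SmoothSchwartzUpTo n T (u k))
    (δ : ℝ) (hδ : 0 < δ)
    -- decay: `|D^β u_k(x,t)| ≤ C_β |φ_β(x)| e^{δ t}` for `t ≤ -T`, all `β`, all `k`
    (hdecay : ∀ (β0 : ℕ) (β : Fin n → ℕ),
      ∃ C : ℝ, 0 < C ∧ ∃ φ : SchwartzMap (Fin n → ℝ) ℝ,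
        ∀ k, ∀ (x : Fin n → ℝ) (t : ℝ), t ≤ -T →
          ‖Dmixed n β0 β (u k) (x, t)‖ ≤ C * |φ x| * Real.exp (δ * t))
    -- each `u_k` vanishes on `𝒪 × (-T,T)`
    (hvanish : ∀ k, ∀ x ∈ 𝒪, ∀ t ∈ Ioo (-T) T, u k (x, t) = 0)
    -- `∑ₖ b_k 𝓗^{α_k} u_k = 0` on `𝒪 × (-T,T)`
    (hsum : ∀ x ∈ 𝒪, ∀ t ∈ Ioo (-T) T,
      ∑ k, b k * fracHeatPoly n (α k) (u k) (x, t) = 0) :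
    ∀ k, ∀ x : Fin n → ℝ, ∀ t ∈ Ioo (-T) T, u k (x, t) = 0 := by
  exact main_aux n 𝒪 h𝒪open h𝒪ne N T α hpos hnotnat hnonres b hb u δ hδ
    (fun k => Good.of_hyp hδ (hreg k) fun β0 β => by
      obtain ⟨C, hC, φ, h⟩ := hdecay β0 β
      exact ⟨C, hC, φ, h k⟩) hvanish hsum

end
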